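/- arXiv:1602.08643 — 4 statements merged into one kernel-verified Lean document; each statement's English description precedes it below -/
import Mathlib

section
/- With the definitions in the context, the free energy difference satisfies F_N^P(A) − F_N(A) = N·[W_N^P(A) − W(A)] + log( g_{N,A}(0) / g^P_{N,A}(0) ). -/
/-!
Write `b = N A` for the prescribed end of the chain. Passing from increments to partial sums is a
unimodular linear change of variables, so a sum of independent variables with densities `r_i` has
density `∫ ∏ r_i(u_i - u_{i-1}) du` at `b`, the integral being over chains with `u_0 = 0` and
`u_N = b`. For the Gibbs densities `r_i(y) = exp(σ y - f_i(y)) / Z_i(σ)` the tilt telescopes to the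
constant `exp(σ b)`, and what remains is the partition function of the constrained chain. If `σ`
maximizes `σ b - ∑ log Z_i(σ)`, then the means of the `r_i` add up to `b`, because the derivative of
`log Z_i` is the Gibbs mean; so `b` corresponds to the point `0` of the centred and rescaled sum,
whose density there is `g(0)`. Hence
`-log ∫ exp(-∑ f_i(u_i - u_{i-1})) du = max_σ (σ b - ∑ log Z_i(σ)) + log √N - log g(0)`.
A defect acting on `u_1` only modifies the first bond, and the theorem is the difference of this
formula with and without the defect.

Evaluating a density at the single point `0` is legitimate because the chain integral is continuous
in its end point: only the last factor depends on it, so a bounded last factor and integrable other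
factors give a dominating function. Superlinear growth of the potentials ensures both.
-/

noncomputable section

open MeasureTheory Real Filter

/-- Extend interior degrees of freedom `u : ℝ^(n-1)` to the whole chain via the
boundary conditions `u 0 = 0` and `u n = b`. -/
def bc (n : ℕ) (b : ℝ) (u : Fin (n - 1) → ℝ) : ℕ → ℝ := fun i =>
  if h : 0 < i ∧ i < n then u ⟨i - 1, by omega⟩ else if i = 0 then 0 else b

/-- The chain energy `∑_{i=1}^n φ_i (u_i - u_{i-1})` with boundary conditions
`u 0 = 0`, `u n = b`. -/
def chainE (φ : ℕ → ℝ → ℝ) (n : ℕ) (b : ℝ) (u : Fin (n - 1) → ℝ) : ℝ :=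
  ∑ i ∈ Finset.range n, φ (i + 1) (bc n b u (i + 1) - bc n b u i)

/-- The free energy `-log ∫_{ℝ^{N-1}} exp(-∑ φ_i(u_i-u_{i-1}) - defect(u₁)) du`. -/
def freeEnergy (φ : ℕ → ℝ → ℝ) (defect : ℝ → ℝ) (N : ℕ) (A : ℝ) : ℝ :=
  - Real.log (∫ u : Fin (N - 1) → ℝ,
      Real.exp (-(chainE φ N (N * A) u) - defect (bc N (N * A) u 1)))

/-- The Cauchy–Born strain energy `W(A)`. -/
def W (ψ : ℝ → ℝ) (A : ℝ) : ℝ :=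
  ⨆ σ : ℝ, (σ * A - Real.log (∫ y : ℝ, Real.exp (-ψ y + σ * y)))

/-- `W_N^P(A)`, the analogue of `W` for the defect material. -/
def WNP (ψ P : ℝ → ℝ) (N : ℕ) (A : ℝ) : ℝ :=
  ⨆ σ : ℝ, (σ * A - (N : ℝ)⁻¹ *
    (Real.log (∫ y : ℝ, Real.exp (-(ψ y + P y) + σ * y)) +
     ((N : ℝ) - 1) * Real.log (∫ y : ℝ, Real.exp (-ψ y + σ * y))))

/-- The one-dimensional Gibbs measure `Z⁻¹ exp(σ y - f y) dy`. -/
def gibbs (f : ℝ → ℝ) (σ : ℝ) : Measure ℝ :=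
  volume.withDensity fun y =>
    ENNReal.ofReal ((∫ z : ℝ, Real.exp (σ * z - f z))⁻¹ * Real.exp (σ * y - f y))

/-- The mean of the Gibbs measure. -/
def gibbsMean (f : ℝ → ℝ) (σ : ℝ) : ℝ :=
  (∫ z : ℝ, z * Real.exp (σ * z - f z)) / (∫ z : ℝ, Real.exp (σ * z - f z))

/-! ### Measures with density -/

section WithDensity

variable {α β : Type*} [MeasurableSpace α] [MeasurableSpace β]

lemma map_withDensity_comp {μ : Measure α} {φ : α → β} {h : β → ENNReal} (hφ : Measurable φ)
    (hh : Measurable h) :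
    (μ.withDensity (h ∘ φ)).map φ = (μ.map φ).withDensity h := by
  ext s hs
  rw [Measure.map_apply hφ hs, withDensity_apply _ (hφ hs), withDensity_apply _ hs,
    setLIntegral_map hs hh hφ]
  rfl

lemma fst_prod_withDensity {μ : Measure α} [SFinite μ] {ν : Measure β} [SFinite ν]
    {w : α × β → ENNReal} (hw : Measurable w) :
    ((μ.prod ν).withDensity w).fst = μ.withDensity fun a => ∫⁻ b, w (a, b) ∂ν := by
  ext s hs
  rw [Measure.fst_apply hs, withDensity_apply _ (measurable_fst hs), withDensity_apply _ hs,
    ← Set.prod_univ, setLIntegral_prod _ hw.aemeasurable, Measure.restrict_univ]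

lemma lintegral_pi_prod_eq_prod {n : ℕ} {E : Fin n → Type*} [∀ i, MeasurableSpace (E i)]
    {μ : ∀ i, Measure (E i)} [∀ i, SigmaFinite (μ i)] {f : ∀ i, E i → ENNReal}
    (hf : ∀ i, Measurable (f i)) :
    ∫⁻ x, ∏ i, f i (x i) ∂Measure.pi μ = ∏ i, ∫⁻ y, f i y ∂μ i := by
  induction n with
  | zero => simp
  | succ n ih =>
    calc ∫⁻ x, ∏ i, f i (x i) ∂Measure.pi μ
      _ = ∫⁻ x : E 0 × (∀ i : Fin n, E i.succ), f 0 x.1 * ∏ i : Fin n, f i.succ (x.2 i)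
            ∂(μ 0).prod (Measure.pi fun i => μ i.succ) := by
          rw [← (measurePreserving_piFinSuccAbove μ 0).symm.map_eq, lintegral_map_equiv]
          refine lintegral_congr fun x => ?_
          exact Fin.prod_univ_succ _
      _ = ∏ i, ∫⁻ y, f i y ∂μ i := by
          have htail : Measurable fun x : ∀ i : Fin n, E i.succ => ∏ i : Fin n, f i.succ (x i) :=
            Finset.measurable_fun_prod _ fun i _ => (hf i.succ).comp (measurable_pi_apply i)
          rw [lintegral_prod_mul (hf 0).aemeasurable htail.aemeasurable, ih fun i => hf i.succ,
            Fin.prod_univ_succ]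

lemma pi_withDensity {n : ℕ} {E : Fin n → Type*} [∀ i, MeasurableSpace (E i)]
    {μ : ∀ i, Measure (E i)} [∀ i, SigmaFinite (μ i)] {f : ∀ i, E i → ENNReal}
    (hf : ∀ i, Measurable (f i)) [∀ i, SigmaFinite ((μ i).withDensity (f i))] :
    Measure.pi (fun i => (μ i).withDensity (f i)) =
      (Measure.pi μ).withDensity fun x => ∏ i, f i (x i) := by
  refine Measure.pi_eq fun s hs => ?_
  rw [withDensity_apply _ (MeasurableSet.univ_pi hs), Measure.restrict_pi_pi,
    lintegral_pi_prod_eq_prod hf]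
  exact Finset.prod_congr rfl fun i _ => (withDensity_apply _ (hs i)).symm

lemma map_const_mul_sub_withDensity {h : ℝ → ENNReal} (hh : Measurable h) {c : ℝ} (hc : c ≠ 0)
    (b : ℝ) :
    (volume.withDensity h).map (fun s => c * (s - b)) =
      volume.withDensity fun t => ENNReal.ofReal |c⁻¹| * h (c⁻¹ * t + b) := by
  have hvol : (volume : Measure ℝ).map (fun s => c * (s - b)) = ENNReal.ofReal |c⁻¹| • volume := by
    rw [← Real.map_volume_mul_left hc]
    nth_rw 2 [← (measurePreserving_sub_right volume b).map_eq]
    exact (Measure.map_map (by fun_prop) (by fun_prop)).symm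
  have hcomp : h = (fun t => h (c⁻¹ * t + b)) ∘ fun s => c * (s - b) := by
    funext s
    simp [hc]
  conv_lhs => rw [hcomp]
  rw [map_withDensity_comp (by fun_prop) (by fun_prop), hvol, withDensity_smul_measure,
    ← withDensity_smul _ (by fun_prop)]
  rfl

lemma apply_eq_of_withDensity_ofReal_eq [TopologicalSpace α] [OpensMeasurableSpace α]
    {μ : Measure α} [SigmaFinite μ] [μ.IsOpenPosMeasure] {f g : α → ℝ} (hf : Continuous f)
    (hg : Continuous g)
    (h : μ.withDensity (fun a => ENNReal.ofReal (f a)) =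
      μ.withDensity fun a => ENNReal.ofReal (g a)) {x : α} (hx : 0 < f x) : g x = f x := by
  have hae := (withDensity_eq_iff_of_sigmaFinite (by fun_prop) (by fun_prop)).1 h
  have heq : ENNReal.ofReal (f x) = ENNReal.ofReal (g x) := congrFun
    ((Continuous.ae_eq_iff_eq μ (ENNReal.continuous_ofReal.comp hf)
      (ENNReal.continuous_ofReal.comp hg)).1 hae) x
  have hgx : 0 < g x := ENNReal.ofReal_pos.1 (heq ▸ ENNReal.ofReal_pos.2 hx)
  exact ((ENNReal.ofReal_eq_ofReal_iff hx.le hgx.le).1 heq).symm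

end WithDensity

/-! ### Increments and partial sums -/

section Increments

variable {n : ℕ}

/-- The map `x ↦ (x_i - x_{i-1})_i`, with the convention `x_{-1} = 0`. It turns partial sums back
into summands. -/
def increments (n : ℕ) : (Fin n → ℝ) →ₗ[ℝ] Fin n → ℝ :=
  LinearMap.pi fun i => LinearMap.proj i -
    (Fin.cons 0 LinearMap.proj : Fin (n + 1) → (Fin n → ℝ) →ₗ[ℝ] ℝ) i.castSucc

lemma increments_apply (x : Fin n → ℝ) (i : Fin n) :
    increments n x i = x i - (Fin.cons 0 x : Fin (n + 1) → ℝ) i.castSucc := by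
  have h (j : Fin (n + 1)) : (Fin.cons 0 LinearMap.proj : Fin (n + 1) → (Fin n → ℝ) →ₗ[ℝ] ℝ) j x =
      (Fin.cons 0 x : Fin (n + 1) → ℝ) j := by
    cases j using Fin.cases <;> rfl
  rw [← h]
  rfl

lemma sum_increments (x : Fin (n + 1) → ℝ) : ∑ i, increments (n + 1) x i = x (Fin.last n) := by
  have h := Fin.sum_Iic_sub (Fin.last n) (Fin.cons 0 x : Fin (n + 2) → ℝ)
  rw [← Fin.top_eq_last, Finset.Iic_top, Fin.top_eq_last, Fin.cons_succ, Fin.cons_zero,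
    sub_zero] at h
  rw [← h]
  simp only [increments_apply, Fin.cons_succ]

lemma increments_snoc_castSucc (u : Fin n → ℝ) (s : ℝ) (i : Fin n) :
    increments (n + 1) (Fin.snoc u s) i.castSucc = increments n u i := by
  rw [increments_apply, increments_apply, Fin.cons_snoc_eq_snoc_cons, Fin.snoc_castSucc,
    Fin.snoc_castSucc]

@[fun_prop]
lemma continuous_increments : Continuous (increments n) := LinearMap.continuous_on_pi _

lemma det_increments : LinearMap.det (increments n) = 1 := by
  have hentry (i j : Fin n) (hij : i ≤ j) :
      LinearMap.toMatrix' (increments n) i j = (Pi.single j 1 : Fin n → ℝ) i := by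
    rw [LinearMap.toMatrix'_apply, increments_apply, sub_eq_self]
    cases n with
    | zero => exact i.elim0
    | succ n =>
      cases i using Fin.cases with
      | zero => rfl
      | succ i =>
        rw [← Fin.succ_castSucc, Fin.cons_succ]
        exact Pi.single_eq_of_ne (i.castSucc_lt_succ.trans_le hij).ne 1
  rw [← LinearMap.det_toMatrix', Matrix.det_of_isLowerTriangular]
  · exact Finset.prod_eq_one fun i _ => by rw [hentry i i le_rfl, Pi.single_eq_same]
  · intro i j hij
    replace hij : i < j := hij
    rw [hentry i j hij.le, Pi.single_eq_of_ne hij.ne]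

lemma measurePreserving_increments : MeasurePreserving (increments n) volume volume := by
  refine ⟨continuous_increments.measurable, ?_⟩
  rw [Real.map_linearMap_volume_pi_eq_smul_volume_pi (by simp [det_increments])]
  simp [det_increments]

lemma measurePreserving_increments_snoc :
    MeasurePreserving
      (fun p : ℝ × (Fin n → ℝ) => increments (n + 1) (Fin.snoc p.2 p.1)) := by
  have h := (volume_preserving_piFinSuccAbove (fun _ : Fin (n + 1) => ℝ) (Fin.last n)).symm
  convert! measurePreserving_increments.comp h using 2 with p
  simp [MeasurableEquiv.piFinSuccAbove_symm_apply, Fin.insertNthEquiv, Fin.insertNth_last']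

lemma map_sum_withDensity {w : (Fin (n + 1) → ℝ) → ENNReal} (hw : Measurable w) :
    (volume.withDensity w).map (fun x => ∑ i, x i) =
      volume.withDensity fun s => ∫⁻ u, w (increments (n + 1) (Fin.snoc u s)) := by
  set φ : ℝ × (Fin n → ℝ) → Fin (n + 1) → ℝ := fun p => increments (n + 1) (Fin.snoc p.2 p.1)
  have hφ : MeasurePreserving φ := measurePreserving_increments_snoc
  have hsum : (fun x => ∑ i, x i) ∘ φ = Prod.fst := by
    funext p
    simp only [φ, Function.comp_apply, sum_increments, Fin.snoc_last]
  calc (volume.withDensity w).map (fun x => ∑ i, x i)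
    _ = ((volume.withDensity (w ∘ φ)).map φ).map (fun x => ∑ i, x i) := by
        rw [map_withDensity_comp hφ.measurable hw, hφ.map_eq]
    _ = (volume.withDensity (w ∘ φ)).fst := by
        rw [Measure.map_map (by fun_prop) hφ.measurable, hsum, Measure.fst]
    _ = volume.withDensity fun s => ∫⁻ u, w (increments (n + 1) (Fin.snoc u s)) := by
        rw [Measure.volume_eq_prod, fst_prod_withDensity (hw.comp hφ.measurable)]
        rfl

end Increments

/-! ### Chain integrals -/

section ChainIntegral

variable {n : ℕ}

/-- The integral of `∏ i, r i (x i)` over the sequences `x` with total `s`, parametrized by their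
first `n` partial sums. If the `r i` are probability densities, this is the density at `s` of a sum
of independent variables; if `r i = exp (-f i)`, it is the partition function of a chain of `n + 1`
bonds with energies `f i` whose ends are clamped at `0` and `s`. -/
def chainIntegral (r : Fin (n + 1) → ℝ → ℝ) (s : ℝ) : ℝ :=
  ∫ u : Fin n → ℝ, ∏ i, r i (increments (n + 1) (Fin.snoc u s) i)

lemma integrable_prod_increments {r : Fin n → ℝ → ℝ} (hri : ∀ i, Integrable (r i)) :
    Integrable fun u : Fin n → ℝ => ∏ i, r i (increments n u i) :=
  measurePreserving_increments.integrable_comp_of_integrable (Integrable.fintype_prod hri)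

variable {r : Fin (n + 1) → ℝ → ℝ} {C : ℝ}

lemma continuous_prod_increments_snoc (hrc : ∀ i, Continuous (r i)) :
    Continuous fun p : ℝ × (Fin n → ℝ) => ∏ i, r i (increments (n + 1) (Fin.snoc p.2 p.1) i) := by
  fun_prop

-- Only the last factor depends on `s`, so this bound is uniform in `s`.
lemma norm_prod_increments_snoc_le (hC : ∀ y, ‖r (Fin.last n) y‖ ≤ C) (s : ℝ) (u : Fin n → ℝ) :
    ‖∏ i, r i (increments (n + 1) (Fin.snoc u s) i)‖ ≤
      ‖∏ i : Fin n, r i.castSucc (increments n u i)‖ * C := by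
  simp only [Fin.prod_univ_castSucc, increments_snoc_castSucc, norm_mul]
  gcongr
  exact hC _

lemma integrable_prod_increments_snoc (hrc : ∀ i, Continuous (r i))
    (hri : ∀ i : Fin n, Integrable (r i.castSucc)) (hC : ∀ y, ‖r (Fin.last n) y‖ ≤ C) (s : ℝ) :
    Integrable fun u : Fin n → ℝ => ∏ i, r i (increments (n + 1) (Fin.snoc u s) i) :=
  ((integrable_prod_increments hri).norm.mul_const C).mono'
    ((continuous_prod_increments_snoc hrc).comp (by fun_prop : Continuous fun u => (s, u))
      |>.aestronglyMeasurable)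
    (ae_of_all _ (norm_prod_increments_snoc_le hC s))

lemma continuous_chainIntegral (hrc : ∀ i, Continuous (r i))
    (hri : ∀ i : Fin n, Integrable (r i.castSucc)) (hC : ∀ y, ‖r (Fin.last n) y‖ ≤ C) :
    Continuous (chainIntegral r) :=
  continuous_of_dominated
    (fun s => (integrable_prod_increments_snoc hrc hri hC s).aestronglyMeasurable)
    (fun s => ae_of_all _ (norm_prod_increments_snoc_le hC s))
    ((integrable_prod_increments hri).norm.mul_const C)
    (ae_of_all _ fun u => (continuous_prod_increments_snoc hrc).comp
      (by fun_prop : Continuous fun s => (s, u)))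

lemma chainIntegral_pos (hrc : ∀ i, Continuous (r i)) (hr : ∀ i y, 0 < r i y)
    (hri : ∀ i : Fin n, Integrable (r i.castSucc)) (hC : ∀ y, ‖r (Fin.last n) y‖ ≤ C) (s : ℝ) :
    0 < chainIntegral r s := by
  have hpos (u : Fin n → ℝ) : 0 < ∏ i, r i (increments (n + 1) (Fin.snoc u s) i) :=
    Finset.prod_pos fun i _ => hr i _
  refine (integral_pos_iff_support_of_nonneg (fun u => (hpos u).le)
    (integrable_prod_increments_snoc hrc hri hC s)).2 ?_
  rw [Set.eq_univ_of_forall (s := Function.support _) fun u => (hpos u).ne']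
  exact isOpen_univ.measure_pos volume Set.univ_nonempty

lemma map_sum_pi_withDensity_ofReal (hrc : ∀ i, Continuous (r i)) (hr : ∀ i y, 0 ≤ r i y)
    (hri : ∀ i : Fin n, Integrable (r i.castSucc)) (hC : ∀ y, ‖r (Fin.last n) y‖ ≤ C) :
    (Measure.pi fun i => volume.withDensity fun y => ENNReal.ofReal (r i y)).map
        (fun x => ∑ i, x i) =
      volume.withDensity fun s => ENNReal.ofReal (chainIntegral r s) := by
  have hmeas (i : Fin (n + 1)) : Measurable fun y => ENNReal.ofReal (r i y) :=
    (hrc i).measurable.ennreal_ofReal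
  have hprod : Measurable fun x : Fin (n + 1) → ℝ => ∏ i, ENNReal.ofReal (r i (x i)) :=
    Finset.measurable_fun_prod _ fun i _ => (hmeas i).comp (measurable_pi_apply i)
  rw [pi_withDensity hmeas, ← volume_pi, map_sum_withDensity hprod]
  congr 1 with s
  rw [chainIntegral, ofReal_integral_eq_lintegral_ofReal
    (integrable_prod_increments_snoc hrc hri hC s)
    (ae_of_all _ fun u => Finset.prod_nonneg fun i _ => hr i _)]
  exact lintegral_congr fun u => (ENNReal.ofReal_prod_of_nonneg fun i _ => hr i _).symm

lemma density_zero_eq_chainIntegral (hrc : ∀ i, Continuous (r i)) (hr : ∀ i y, 0 < r i y)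
    (hri : ∀ i : Fin n, Integrable (r i.castSucc)) (hC : ∀ y, ‖r (Fin.last n) y‖ ≤ C)
    {c : ℝ} (hc : 0 < c) (b : ℝ) {g : ℝ → ℝ} (hg : Continuous g)
    (hlaw : (Measure.pi fun i => volume.withDensity fun y => ENNReal.ofReal (r i y)).map
        (fun x => c * (∑ i, x i - b)) = volume.withDensity fun t => ENNReal.ofReal (g t)) :
    g 0 = c⁻¹ * chainIntegral r b := by
  have hcont := continuous_chainIntegral hrc hri hC
  have hdensity : volume.withDensity (fun t => ENNReal.ofReal (c⁻¹ * chainIntegral r (c⁻¹ * t + b)))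
      = volume.withDensity fun t => ENNReal.ofReal (g t) := by
    rw [← hlaw, show (fun x : Fin (n + 1) → ℝ => c * (∑ i, x i - b)) =
      (fun s => c * (s - b)) ∘ fun x => ∑ i, x i from rfl,
      ← Measure.map_map (by fun_prop) (by fun_prop),
      map_sum_pi_withDensity_ofReal hrc (fun i y => (hr i y).le) hri hC,
      map_const_mul_sub_withDensity hcont.measurable.ennreal_ofReal hc.ne']
    simp only [abs_of_pos (inv_pos.2 hc), ENNReal.ofReal_mul (inv_pos.2 hc).le]
  have hpos := mul_pos (inv_pos.2 hc) (chainIntegral_pos hrc hr hri hC b)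
  simpa using apply_eq_of_withDensity_ofReal_eq (x := 0) (by fun_prop) hg hdensity (by simpa)

end ChainIntegral

/-! ### Superlinear potentials -/

section Potential

/-- Finiteness of the convex conjugate of `f` at every slope, that is, superlinear growth of `f`:
the condition under which `exp (-f)` has exponential moments of all orders. -/
def HasFiniteConjugate (f : ℝ → ℝ) : Prop :=
  ∀ σ, BddAbove (Set.range fun y => σ * y - f y)

variable {f : ℝ → ℝ}

lemma HasFiniteConjugate.exists_exp_le (hf : HasFiniteConjugate f) (σ : ℝ) :
    ∃ C, ∀ y, exp (σ * y - f y) ≤ C := by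
  obtain ⟨B, hB⟩ := hf σ
  exact ⟨exp B, fun y => exp_le_exp.2 (hB ⟨y, rfl⟩)⟩

lemma HasFiniteConjugate.integrable_exp (hf : HasFiniteConjugate f) (hfm : Measurable f) (σ : ℝ) :
    Integrable fun y => exp (σ * y - f y) := by
  obtain ⟨B, hB⟩ := hf (σ + 1)
  obtain ⟨B', hB'⟩ := hf (σ - 1)
  have htail (y : ℝ) : σ * y - f y ≤ max B B' - |y| := by
    have hr : (σ + 1) * y - f y ≤ B := hB ⟨y, rfl⟩
    have hl : (σ - 1) * y - f y ≤ B' := hB' ⟨y, rfl⟩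
    rcases abs_cases y with ⟨hy, -⟩ | ⟨hy, -⟩ <;> rw [hy]
    · linarith [le_max_left B B']
    · linarith [le_max_right B B']
  have hexp (y : ℝ) : exp (-|y|) ≤ 2 * (1 + y ^ 2)⁻¹ := by
    have hquad := quadratic_le_exp_of_nonneg (abs_nonneg y)
    rw [sq_abs] at hquad
    rw [exp_neg, ← div_eq_mul_inv, inv_le_comm₀ (exp_pos _) (by positivity), inv_div]
    linarith [abs_nonneg y]
  refine ((integrable_inv_one_add_sq.const_mul 2).const_mul (exp (max B B'))).mono'
    (by fun_prop) (ae_of_all _ fun y => ?_)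
  calc ‖exp (σ * y - f y)‖ = exp (σ * y - f y) := abs_exp _
    _ ≤ exp (max B B') * exp (-|y|) := by
        rw [← exp_add, ← sub_eq_add_neg]
        exact exp_le_exp.2 (htail y)
    _ ≤ exp (max B B') * (2 * (1 + y ^ 2)⁻¹) := by
        gcongr
        exact hexp y

lemma strongConvexOn_of_le_deriv2 {c : ℝ} (hf : ContDiff ℝ 2 f) (hc : ∀ y, c ≤ deriv (deriv f) y) :
    StrongConvexOn Set.univ c f := by
  have hf' : Differentiable ℝ f := hf.differentiable two_ne_zero
  have hf'' : Differentiable ℝ (deriv f) := hf.differentiable_deriv_two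
  have hderiv : deriv (fun x => f x - c / 2 * x ^ 2) = fun x => deriv f x - c * x := by
    funext x
    have h := (hf' x).hasDerivAt.sub ((hasDerivAt_pow 2 x).const_mul (c / 2))
    exact h.deriv.trans (by norm_num; ring)
  rw [strongConvexOn_iff_convex]
  simp only [norm_eq_abs, sq_abs]
  refine convexOn_univ_of_deriv2_nonneg (by fun_prop) (hderiv ▸ by fun_prop) fun x => ?_
  have h := (hf'' x).hasDerivAt.sub ((hasDerivAt_id x).const_mul c)
  rw [Function.iterate_succ_apply, Function.iterate_one, hderiv]
  exact (sub_nonneg.2 (hc x)).trans_eq (h.deriv.trans (by rw [mul_one])).symm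

lemma hasFiniteConjugate_of_strongConvexOn {c : ℝ} (hc : 0 < c)
    (hf : StrongConvexOn Set.univ c f) : HasFiniteConjugate f := by
  intro σ
  have hconv := strongConvexOn_iff_convex.1 hf
  obtain ⟨a, a', ha⟩ := hconv.exists_affine_le_real isClosed_univ
    (hconv.continuousOn isOpen_univ).lowerSemicontinuousOn
  refine ⟨(σ - a) ^ 2 / (2 * c) - a', ?_⟩
  rintro - ⟨y, rfl⟩
  have hy : a * y + a' ≤ f y - c / 2 * y ^ 2 := by simpa using ha y (Set.mem_univ y)
  have hsq : (σ - a) * y - c / 2 * y ^ 2 =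
      (σ - a) ^ 2 / (2 * c) - (σ - a - c * y) ^ 2 / (2 * c) := by field
  have hnn : 0 ≤ (σ - a - c * y) ^ 2 / (2 * c) := by positivity
  dsimp only
  linarith

end Potential

/-! ### Gibbs measures -/

section Gibbs

/-- The logarithm of the partition function of the potential `f` tilted by `σ`. -/
def logPartition (f : ℝ → ℝ) (σ : ℝ) : ℝ :=
  log (∫ y, exp (σ * y - f y))

/-- The density of `gibbs f σ`, with the normalizing constant moved into the exponent. -/
def gibbsDensity (f : ℝ → ℝ) (σ y : ℝ) : ℝ :=
  exp (σ * y - f y - logPartition f σ)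

variable {f : ℝ → ℝ} {σ : ℝ}

lemma gibbs_eq_withDensity_gibbsDensity (hf : Integrable fun y => exp (σ * y - f y)) :
    gibbs f σ = volume.withDensity fun y => ENNReal.ofReal (gibbsDensity f σ y) := by
  simp only [gibbs, gibbsDensity, logPartition, exp_sub _ (log _), exp_log (integral_exp_pos hf),
    div_eq_inv_mul]

lemma gibbsDensity_eq_mul (y : ℝ) :
    gibbsDensity f σ y = exp (-logPartition f σ) * exp (σ * y - f y) := by
  rw [gibbsDensity, ← exp_add, neg_add_eq_sub]

lemma continuous_gibbsDensity (hf : Continuous f) : Continuous (gibbsDensity f σ) := by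
  unfold gibbsDensity
  fun_prop

lemma HasFiniteConjugate.integrable_gibbsDensity (hf : HasFiniteConjugate f) (hfm : Measurable f) :
    Integrable (gibbsDensity f σ) := by
  simp_rw [funext gibbsDensity_eq_mul]
  exact (hf.integrable_exp hfm σ).const_mul _

lemma HasFiniteConjugate.exists_norm_gibbsDensity_le (hf : HasFiniteConjugate f) (σ : ℝ) :
    ∃ C, ∀ y, ‖gibbsDensity f σ y‖ ≤ C := by
  obtain ⟨C, hC⟩ := hf.exists_exp_le σ
  refine ⟨exp (-logPartition f σ) * C, fun y => ?_⟩
  rw [gibbsDensity_eq_mul, norm_mul, norm_of_nonneg (exp_nonneg _), norm_of_nonneg (exp_nonneg _)]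
  gcongr
  exact hC y

lemma HasFiniteConjugate.hasDerivAt_logPartition (hf : HasFiniteConjugate f) (hfm : Measurable f)
    (σ : ℝ) : HasDerivAt (logPartition f) (gibbsMean f σ) σ := by
  set μ : Measure ℝ := volume.withDensity fun y => ENNReal.ofReal (exp (-f y)) with hμ
  have hdens : Measurable fun y => ENNReal.ofReal (exp (-f y)) := by fun_prop
  have hsmul (τ y c : ℝ) : (ENNReal.ofReal (exp (-f y))).toReal • (c * exp (τ * y)) =
      c * exp (τ * y - f y) := by
    rw [ENNReal.toReal_ofReal (exp_nonneg _), smul_eq_mul, sub_eq_neg_add, exp_add]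
    ring
  have hset : ProbabilityTheory.integrableExpSet id μ = Set.univ := by
    refine Set.eq_univ_of_forall fun τ => ?_
    have hint := hf.integrable_exp hfm τ
    simp_rw [fun y => (one_mul (exp (τ * y - f y))).symm.trans (hsmul τ y 1).symm] at hint
    simpa [ProbabilityTheory.integrableExpSet, hμ, integrable_withDensity_iff_integrable_smul' hdens
      (ae_of_all _ fun _ => ENNReal.ofReal_lt_top)] using hint
  have hintegral (h : ℝ → ℝ) (τ : ℝ) :
      ∫ y, h y * exp (τ * y) ∂μ = ∫ y, h y * exp (τ * y - f y) := by
    simp only [hμ, integral_withDensity_eq_integral_toReal_smul hdens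
      (ae_of_all _ fun _ => ENNReal.ofReal_lt_top), hsmul]
  have hmgf : ProbabilityTheory.mgf id μ = fun τ => ∫ y, exp (τ * y - f y) := by
    funext τ
    simpa [ProbabilityTheory.mgf] using hintegral (fun _ => 1) τ
  have hderiv := ProbabilityTheory.hasDerivAt_mgf (X := id) (μ := μ) (t := σ) (by simp [hset])
  simp only [id, hintegral, hmgf] at hderiv
  exact hderiv.log (integral_exp_pos (hf.integrable_exp hfm σ)).ne'

end Gibbs

section GibbsChain

variable {n : ℕ} {f : Fin n → ℝ → ℝ} {σ b : ℝ}

lemma sum_gibbsMean_eq_of_isMaxOn (hfm : ∀ i, Measurable (f i))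
    (hconj : ∀ i, HasFiniteConjugate (f i))
    (hσ : IsMaxOn (fun τ => τ * b - ∑ i, logPartition (f i) τ) Set.univ σ) :
    ∑ i, gibbsMean (f i) σ = b := by
  have hderiv := ((hasDerivAt_id σ).mul_const b).sub
    (HasDerivAt.fun_sum (u := Finset.univ) fun i _ => (hconj i).hasDerivAt_logPartition (hfm i) σ)
  have hzero := (hσ.isLocalMax univ_mem).hasDerivAt_eq_zero hderiv
  linarith

-- The tilt is constant on chains with prescribed ends because their increments telescope.
lemma chainIntegral_gibbsDensity (f : Fin (n + 1) → ℝ → ℝ) (σ s : ℝ) :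
    chainIntegral (fun i => gibbsDensity (f i) σ) s =
      exp (σ * s - ∑ i, logPartition (f i) σ) * chainIntegral (fun i y => exp (-f i y)) s := by
  rw [chainIntegral, chainIntegral, ← integral_const_mul]
  refine integral_congr_ae (ae_of_all _ fun u => ?_)
  have hsum := sum_increments (Fin.snoc u s : Fin (n + 1) → ℝ)
  rw [Fin.snoc_last] at hsum
  simp only [gibbsDensity, ← exp_sum, ← exp_add, Finset.sum_sub_distrib, ← Finset.mul_sum, hsum,
    Finset.sum_neg_distrib]
  ring_nf

lemma neg_log_chainIntegral_exp_neg {f : Fin (n + 1) → ℝ → ℝ} (hf : ∀ i, Continuous (f i))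
    (hconj : ∀ i, HasFiniteConjugate (f i)) (hmean : ∑ i, gibbsMean (f i) σ = b)
    {c : ℝ} (hc : 0 < c) {g : ℝ → ℝ} (hg : Continuous g)
    (hlaw : (Measure.pi fun i => gibbs (f i) σ).map
        (fun x => c * ∑ i, (x i - gibbsMean (f i) σ)) =
      volume.withDensity fun t => ENNReal.ofReal (g t)) :
    0 < g 0 ∧ -log (chainIntegral (fun i y => exp (-f i y)) b) =
      σ * b - ∑ i, logPartition (f i) σ - log c - log (g 0) := by
  have hrc (i) : Continuous (gibbsDensity (f i) σ) := continuous_gibbsDensity (hf i)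
  have hr (i) (y : ℝ) : 0 < gibbsDensity (f i) σ y := exp_pos _
  have hri (i) : Integrable (gibbsDensity (f i) σ) :=
    (hconj i).integrable_gibbsDensity (hf i).measurable
  obtain ⟨C, hC⟩ := (hconj (Fin.last n)).exists_norm_gibbsDensity_le σ
  simp only [Finset.sum_sub_distrib, hmean, fun i =>
    gibbs_eq_withDensity_gibbsDensity ((hconj i).integrable_exp (hf i).measurable σ)] at hlaw
  have hg0 := density_zero_eq_chainIntegral hrc hr (fun i => hri i.castSucc) hC hc b hg hlaw
  have hpos := chainIntegral_pos hrc hr (fun i => hri i.castSucc) hC b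
  refine ⟨hg0 ▸ mul_pos (inv_pos.2 hc) hpos, ?_⟩
  rw [chainIntegral_gibbsDensity] at hg0 hpos
  have hZ := pos_of_mul_pos_right hpos (exp_nonneg _)
  rw [hg0, log_mul (inv_pos.2 hc).ne' hpos.ne', log_mul (exp_ne_zero _) hZ.ne', log_exp, log_inv]
  ring

end GibbsChain

/-! ### Free energies -/

section FreeEnergy

/-- The potential of the `i`-th bond, counted from `0`. Since `u 0 = 0`, a defect acting on `u 1`
is a modification of the first bond. -/
def bondPotential (φ : ℕ → ℝ → ℝ) (Q : ℝ → ℝ) (i : ℕ) : ℝ → ℝ :=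
  if i = 0 then fun y => φ 1 y + Q y else φ (i + 1)

variable {φ : ℕ → ℝ → ℝ} {Q : ℝ → ℝ} {n N : ℕ} {A σ : ℝ}

lemma bondPotential_induction {ψ : ℝ → ℝ} {p : (ℝ → ℝ) → Prop} (hψ : p ψ)
    (hψQ : p fun z => ψ z + Q z) (i : ℕ) : p (bondPotential (fun _ => ψ) Q i) := by
  unfold bondPotential
  split_ifs
  exacts [hψQ, hψ]

lemma bc_eq_cons_snoc (b : ℝ) (u : Fin n → ℝ) (k : Fin (n + 2)) :
    bc (n + 1) b u k = (Fin.cons 0 (Fin.snoc u b) : Fin (n + 2) → ℝ) k := by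
  cases k using Fin.cases with
  | zero => simp [bc]
  | succ k => cases k using Fin.lastCases <;> simp [bc]

lemma bc_sub_bc (b : ℝ) (u : Fin n → ℝ) (i : Fin (n + 1)) :
    bc (n + 1) b u (i + 1) - bc (n + 1) b u i = increments (n + 1) (Fin.snoc u b) i := by
  rw [increments_apply, ← bc_eq_cons_snoc, Fin.val_castSucc, ← Fin.val_succ, bc_eq_cons_snoc,
    Fin.cons_succ]

lemma chainE_add_defect (b : ℝ) (u : Fin n → ℝ) :
    chainE φ (n + 1) b u + Q (bc (n + 1) b u 1) =
      ∑ i : Fin (n + 1), bondPotential φ Q i (increments (n + 1) (Fin.snoc u b) i) := by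
  have hfirst : bc (n + 1) b u 1 = increments (n + 1) (Fin.snoc u b) 0 := by
    simpa [bc] using bc_sub_bc b u 0
  simp only [chainE, Finset.sum_range, bc_sub_bc, hfirst, Fin.sum_univ_succ, bondPotential,
    Fin.val_zero, Fin.val_succ, Nat.succ_ne_zero, ↓reduceIte]
  ring

lemma freeEnergy_eq_neg_log_chainIntegral :
    freeEnergy φ Q (n + 1) A = -log (chainIntegral
      (fun (i : Fin (n + 1)) y => exp (-bondPotential φ Q i y)) ((n + 1 : ℕ) * A)) := by
  refine congrArg (fun Z => -log Z) (integral_congr_ae (ae_of_all _ fun u => ?_))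
  dsimp only
  rw [← exp_sum, Finset.sum_neg_distrib, ← chainE_add_defect, neg_add']

lemma freeEnergy_eq_of_isMaxOn (hN : N ≠ 0)
    (hf : ∀ i : Fin N, Continuous (bondPotential φ Q i))
    (hconj : ∀ i : Fin N, HasFiniteConjugate (bondPotential φ Q i))
    (hσ : IsMaxOn (fun τ => τ * (N * A) - ∑ i : Fin N, logPartition (bondPotential φ Q i) τ)
      Set.univ σ)
    {c : ℝ} (hc : 0 < c) {g : ℝ → ℝ} (hg : Continuous g)
    (hlaw : (Measure.pi fun i : Fin N => gibbs (bondPotential φ Q i) σ).map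
        (fun x => c * ∑ i : Fin N, (x i - gibbsMean (bondPotential φ Q i) σ)) =
      volume.withDensity fun t => ENNReal.ofReal (g t)) :
    0 < g 0 ∧ freeEnergy φ Q N A =
      σ * (N * A) - ∑ i : Fin N, logPartition (bondPotential φ Q i) σ - log c - log (g 0) := by
  obtain ⟨n, rfl⟩ := Nat.exists_eq_succ_of_ne_zero hN
  rw [Nat.succ_eq_add_one, freeEnergy_eq_neg_log_chainIntegral]
  exact neg_log_chainIntegral_exp_neg hf hconj
    (sum_gibbsMean_eq_of_isMaxOn (fun i => (hf i).measurable) hconj hσ) hc hg hlaw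

variable {ψ P : ℝ → ℝ} {c : ℝ} {g : ℝ → ℝ}

lemma freeEnergy_eq_W (hN : N ≠ 0) (hψ : Continuous ψ) (hψconj : HasFiniteConjugate ψ)
    (hσ : ∀ τ : ℝ,
      τ * A - log (∫ y, exp (-ψ y + τ * y)) ≤ σ * A - log (∫ y, exp (-ψ y + σ * y)))
    (hc : 0 < c) (hg : Continuous g)
    (hlaw : (Measure.pi fun _ : Fin N => gibbs ψ σ).map
        (fun x => c * ∑ i, (x i - gibbsMean ψ σ)) =
      volume.withDensity fun t => ENNReal.ofReal (g t)) :
    0 < g 0 ∧ freeEnergy (fun _ => ψ) (fun _ => 0) N A = N * W ψ A - log c - log (g 0) := by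
  have hbond (i : ℕ) : bondPotential (fun _ => ψ) (fun _ => 0) i = ψ := by
    simp [bondPotential]
  have hobj (τ : ℝ) : τ * (N * A) - ∑ i : Fin N, logPartition
      (bondPotential (fun _ => ψ) (fun _ => 0) i) τ =
      N * (τ * A - log (∫ y, exp (-ψ y + τ * y))) := by
    simp only [hbond, logPartition, neg_add_eq_sub, Fin.sum_const, nsmul_eq_mul]
    ring
  have hW : W ψ A = _ := IsGreatest.csSup_eq ⟨⟨σ, rfl⟩, Set.forall_mem_range.2 hσ⟩
  rw [hW, ← hobj]
  refine freeEnergy_eq_of_isMaxOn hN (by simpa only [hbond] using fun _ => hψ)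
    (by simpa only [hbond] using fun _ => hψconj) (fun τ _ => ?_) hc hg (by simpa only [hbond])
  exact (hobj τ).trans_le ((mul_le_mul_of_nonneg_left (hσ τ) N.cast_nonneg).trans_eq (hobj σ).symm)

lemma freeEnergy_eq_WNP (hN : N ≠ 0) (hψ : Continuous ψ) (hP : Continuous P)
    (hψconj : HasFiniteConjugate ψ) (hψPconj : HasFiniteConjugate fun z => ψ z + P z)
    (hσ : ∀ τ : ℝ,
      τ * A - (N : ℝ)⁻¹ * (log (∫ y, exp (-(ψ y + P y) + τ * y)) +
        ((N : ℝ) - 1) * log (∫ y, exp (-ψ y + τ * y))) ≤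
      σ * A - (N : ℝ)⁻¹ * (log (∫ y, exp (-(ψ y + P y) + σ * y)) +
        ((N : ℝ) - 1) * log (∫ y, exp (-ψ y + σ * y))))
    (hc : 0 < c) (hg : Continuous g)
    (hlaw : (Measure.pi fun i : Fin N =>
        if (i : ℕ) = 0 then gibbs (fun z => ψ z + P z) σ else gibbs ψ σ).map
        (fun x => c * ∑ i : Fin N,
          (x i - if (i : ℕ) = 0 then gibbsMean (fun z => ψ z + P z) σ else gibbsMean ψ σ)) =
      volume.withDensity fun t => ENNReal.ofReal (g t)) :
    0 < g 0 ∧ freeEnergy (fun _ => ψ) P N A = N * WNP ψ P N A - log c - log (g 0) := by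
  have hobj (τ : ℝ) : τ * (N * A) - ∑ i : Fin N, logPartition (bondPotential (fun _ => ψ) P i) τ =
      N * (τ * A - (N : ℝ)⁻¹ * (log (∫ y, exp (-(ψ y + P y) + τ * y)) +
        ((N : ℝ) - 1) * log (∫ y, exp (-ψ y + τ * y)))) := by
    obtain ⟨n, rfl⟩ := Nat.exists_eq_succ_of_ne_zero hN
    simp only [Fin.sum_univ_succ, bondPotential, Fin.val_zero, Fin.val_succ, Nat.succ_ne_zero,
      ↓reduceIte, logPartition, neg_add_eq_sub, Fin.sum_const, nsmul_eq_mul]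
    push_cast
    field
  have hWNP : WNP ψ P N A = _ := IsGreatest.csSup_eq ⟨⟨σ, rfl⟩, Set.forall_mem_range.2 hσ⟩
  rw [hWNP, ← hobj]
  refine freeEnergy_eq_of_isMaxOn hN (fun i => bondPotential_induction hψ (hψ.add hP) i)
    (fun i => bondPotential_induction hψconj hψPconj i) (fun τ _ => ?_) hc hg ?_
  · exact (hobj τ).trans_le
      ((mul_le_mul_of_nonneg_left (hσ τ) N.cast_nonneg).trans_eq (hobj σ).symm)
  · simpa only [bondPotential, apply_ite (gibbs · σ), apply_ite (gibbsMean · σ)] using hlaw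

end FreeEnergy

theorem free_energy_difference_identity_general
    {ψ P : ℝ → ℝ} (hψ : Continuous ψ) (hP : Continuous P)
    (hψconj : HasFiniteConjugate ψ) (hψPconj : HasFiniteConjugate fun z => ψ z + P z)
    {N : ℕ} (hN : N ≠ 0) {A σ₀ σP : ℝ}
    (hσ₀ : ∀ σ : ℝ,
      σ * A - log (∫ y, exp (-ψ y + σ * y)) ≤ σ₀ * A - log (∫ y, exp (-ψ y + σ₀ * y)))
    (hσP : ∀ σ : ℝ,
      σ * A - (N : ℝ)⁻¹ * (log (∫ y, exp (-(ψ y + P y) + σ * y)) +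
        ((N : ℝ) - 1) * log (∫ y, exp (-ψ y + σ * y))) ≤
      σP * A - (N : ℝ)⁻¹ * (log (∫ y, exp (-(ψ y + P y) + σP * y)) +
        ((N : ℝ) - 1) * log (∫ y, exp (-ψ y + σP * y))))
    {g gP : ℝ → ℝ} (hgcont : Continuous g) (hgPcont : Continuous gP)
    (hg : (Measure.pi fun _ : Fin N => gibbs ψ σ₀).map
        (fun x => (√N)⁻¹ * ∑ i, (x i - gibbsMean ψ σ₀)) =
      volume.withDensity fun t => ENNReal.ofReal (g t))
    (hgP : (Measure.pi fun i : Fin N =>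
        if (i : ℕ) = 0 then gibbs (fun z => ψ z + P z) σP else gibbs ψ σP).map
        (fun x => (√N)⁻¹ * ∑ i : Fin N,
          (x i - if (i : ℕ) = 0 then gibbsMean (fun z => ψ z + P z) σP else gibbsMean ψ σP)) =
      volume.withDensity fun t => ENNReal.ofReal (gP t)) :
    freeEnergy (fun _ => ψ) P N A - freeEnergy (fun _ => ψ) (fun _ => 0) N A =
      N * (WNP ψ P N A - W ψ A) + log (g 0 / gP 0) := by
  have hscale : 0 < (√N)⁻¹ := inv_pos.2 (sqrt_pos.2 (Nat.cast_pos.2 (Nat.pos_of_ne_zero hN)))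
  obtain ⟨hg0, hF⟩ := freeEnergy_eq_W hN hψ hψconj hσ₀ hscale hgcont hg
  obtain ⟨hgP0, hFP⟩ := freeEnergy_eq_WNP hN hψ hP hψconj hψPconj hσP hscale hgPcont hgP
  rw [hF, hFP, log_div hg0.ne' hgP0.ne']
  ring

/-- `F_N^P(A) - F_N(A) = N [W_N^P(A) - W(A)] + log (g_{N,A}(0) / g^P_{N,A}(0))`. -/
theorem free_energy_difference_identity
    (ψ P : ℝ → ℝ) (κ₁ κ₂ ς₁ ς₂ : ℝ)
    (hψ : ContDiff ℝ 2 ψ) (hP : ContDiff ℝ 2 P)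
    (hκ₁ : 0 < κ₁) (hκ : κ₁ ≤ κ₂) (hς₁ : 0 < ς₁) (hς : ς₁ ≤ ς₂)
    (hψ'' : ∀ y : ℝ, κ₁ ≤ deriv (deriv ψ) y ∧ deriv (deriv ψ) y ≤ κ₂)
    (hψP'' : ∀ y : ℝ, ς₁ ≤ deriv (deriv (fun z => ψ z + P z)) y ∧
        deriv (deriv (fun z => ψ z + P z)) y ≤ ς₂)
    (N : ℕ) (hN : 2 ≤ N) (A σ₀ σP : ℝ)
    (hσ₀ : ∀ σ : ℝ,
      σ * A - Real.log (∫ y : ℝ, Real.exp (-ψ y + σ * y)) ≤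
      σ₀ * A - Real.log (∫ y : ℝ, Real.exp (-ψ y + σ₀ * y)))
    (hσP : ∀ σ : ℝ,
      σ * A - (N : ℝ)⁻¹ *
        (Real.log (∫ y : ℝ, Real.exp (-(ψ y + P y) + σ * y)) +
         ((N : ℝ) - 1) * Real.log (∫ y : ℝ, Real.exp (-ψ y + σ * y))) ≤
      σP * A - (N : ℝ)⁻¹ *
        (Real.log (∫ y : ℝ, Real.exp (-(ψ y + P y) + σP * y)) +
         ((N : ℝ) - 1) * Real.log (∫ y : ℝ, Real.exp (-ψ y + σP * y))))
    (g gP : ℝ → ℝ) (hgcont : Continuous g) (hgPcont : Continuous gP)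
    (hg : Measure.map
        (fun x : Fin N → ℝ => (Real.sqrt N)⁻¹ * ∑ i, (x i - gibbsMean ψ σ₀))
        (Measure.pi fun _ : Fin N => gibbs ψ σ₀)
      = volume.withDensity fun t => ENNReal.ofReal (g t))
    (hgP : Measure.map
        (fun x : Fin N → ℝ => (Real.sqrt N)⁻¹ * ∑ i,
          (x i - if (i : ℕ) = 0 then gibbsMean (fun z => ψ z + P z) σP
                 else gibbsMean ψ σP))
        (Measure.pi fun i : Fin N =>
          if (i : ℕ) = 0 then gibbs (fun z => ψ z + P z) σP else gibbs ψ σP)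
      = volume.withDensity fun t => ENNReal.ofReal (gP t)) :
    freeEnergy (fun _ => ψ) P N A - freeEnergy (fun _ => ψ) (fun _ => 0) N A =
      N * (WNP ψ P N A - W ψ A) + Real.log (g 0 / gP 0) := by
  exact free_energy_difference_identity_general hψ.continuous hP.continuous
      (hasFiniteConjugate_of_strongConvexOn hκ₁
        (strongConvexOn_of_le_deriv2 hψ fun y => (hψ'' y).1))
      (hasFiniteConjugate_of_strongConvexOn hς₁
        (strongConvexOn_of_le_deriv2 (hψ.add hP) fun y => (hψP'' y).1))
      (by omega) hσ₀ hσP hgcont hgPcont hg hgP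
end
end

section
/- For every σ ∈ ℝ the functions Ψ and Φ are differentiable at σ and satisfy 1/κ₂ ≤ Ψ'(σ) ≤ 1/κ₁ and 1/ς₂ − 1/κ₁ ≤ Φ'(σ) ≤ 1/ς₁ − 1/κ₂; in particular |Φ'(σ)| is bounded uniformly in σ. -/
/-!
Let `μ_V` be the probability measure with density proportional to `exp (-V)`. Then `Ψ(σ)` is the
mean of `μ_V` for `V y = f y - σ y`; it is also the derivative of the cumulant generating function
of `μ_f`, so `Ψ'(σ)` is the variance of `μ_V`. For `Y` distributed according to `μ_V`, integration
by parts gives `Cov (Y, V'(Y)) = 1`. If `k₁ ≤ V'' ≤ k₂`, then `V'(y) - k₁ y` is increasing and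
`V'(y) - k₂ y` is decreasing in `y`, so Chebyshev's association inequality yields
`k₁ Var Y ≤ 1 ≤ k₂ Var Y`. Subtracting the resulting bounds for `ψ` from those for `ψ + P` gives the
bounds on `Φ'`.
-/

noncomputable section

open MeasureTheory Real

/-- `Ψ(σ) = (∫ y exp(-f(y)+σy) dy) / (∫ exp(-f(y)+σy) dy)`. -/
def Psi (f : ℝ → ℝ) (σ : ℝ) : ℝ :=
  (∫ y : ℝ, y * Real.exp (-f y + σ * y)) / (∫ y : ℝ, Real.exp (-f y + σ * y))

open ProbabilityTheory

section Covariance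

/-- Chebyshev's association inequality, proved by averaging `(X ω' - X ω) * (Y ω' - Y ω)` over
independent `ω` and `ω'`. -/
lemma covariance_nonneg_of_monovary {Ω : Type*} {mΩ : MeasurableSpace Ω} {μ : Measure Ω}
    [IsProbabilityMeasure μ] {X Y : Ω → ℝ} (hX : MemLp X 2 μ) (hY : MemLp Y 2 μ)
    (hXY : Monovary X Y) : 0 ≤ cov[X, Y; μ] := by
  have hXi : Integrable X μ := hX.integrable one_le_two
  have hYi : Integrable Y μ := hY.integrable one_le_two
  have integral_sub_mul_sub (ω : Ω) :
      ∫ ω', (X ω' - X ω) * (Y ω' - Y ω) ∂μ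
        = cov[X, Y; μ] + (X ω - μ[X]) * (Y ω - μ[Y]) := by
    have h := covariance_eq_sub (hX.sub (memLp_const (X ω))) (hY.sub (memLp_const (Y ω)))
    have hXmean : ∫ ω', (X ω' - X ω) ∂μ = μ[X] - X ω := by simp [integral_sub, hXi]
    have hYmean : ∫ ω', (Y ω' - Y ω) ∂μ = μ[Y] - Y ω := by simp [integral_sub, hYi]
    simp only [Pi.sub_def, Pi.mul_def, covariance_sub_const_left hXi,
      covariance_sub_const_right hYi, hXmean, hYmean] at h
    linarith
  have pointwise_nonneg (ω : Ω) : 0 ≤ cov[X, Y; μ] + (X ω - μ[X]) * (Y ω - μ[Y]) := by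
    rw [← integral_sub_mul_sub]
    exact integral_nonneg fun ω' ↦ hXY.sub_mul_sub_nonneg ω ω'
  have h := integral_nonneg_of_ae (ae_of_all μ pointwise_nonneg)
  have hint : Integrable (fun ω ↦ (X ω - μ[X]) * (Y ω - μ[Y])) μ :=
    (hX.sub (memLp_const _)).integrable_mul (hY.sub (memLp_const _))
  rw [integral_add (integrable_const _) hint, integral_const, probReal_univ, one_smul,
    ← covariance] at h
  linarith

variable {μ : Measure ℝ} [IsProbabilityMeasure μ] {g : ℝ → ℝ} {k : ℝ}

lemma mul_variance_id_le_covariance (hid : MemLp id 2 μ) (hg : MemLp g 2 μ)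
    (hmono : Monotone fun y ↦ g y - k * y) : k * Var[id; μ] ≤ cov[id, g; μ] := by
  have hkid : MemLp (fun y ↦ k * id y) 2 μ := hid.const_mul k
  have h := covariance_nonneg_of_monovary hid (hg.sub hkid) (monotone_id.monovary hmono)
  rw [covariance_sub_right hid hg hkid, covariance_const_mul_right, covariance_self aemeasurable_id]
    at h
  linarith

lemma covariance_le_mul_variance_id (hid : MemLp id 2 μ) (hg : MemLp g 2 μ)
    (hanti : Antitone fun y ↦ g y - k * y) : cov[id, g; μ] ≤ k * Var[id; μ] := by
  have hmono : Monotone fun y ↦ -g y - -k * y := by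
    simpa only [sub_eq_add_neg, neg_add, neg_mul, Pi.neg_def] using hanti.neg
  have h := mul_variance_id_le_covariance hid hg.neg hmono
  rw [covariance_neg_right] at h
  linarith

end Covariance

section Gibbs

/-- The Gibbs measure of the potential `V`: the probability measure on `ℝ` with density proportional
to `exp (-V)`. It is the zero measure if `exp (-V)` is not integrable. -/
def gibbsMeasure (V : ℝ → ℝ) : Measure ℝ :=
  volume.tilted fun y ↦ -V y

variable {V : ℝ → ℝ}

lemma isProbabilityMeasure_gibbsMeasure (hV : Integrable fun y ↦ exp (-V y)) :
    IsProbabilityMeasure (gibbsMeasure V) :=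
  isProbabilityMeasure_tilted hV

lemma tilted_gibbsMeasure (hV : Integrable fun y ↦ exp (-V y)) (σ : ℝ) :
    (gibbsMeasure V).tilted (fun y ↦ σ * y) = gibbsMeasure fun y ↦ V y - σ * y := by
  rw [gibbsMeasure, tilted_tilted hV, gibbsMeasure]
  congr 1 with y
  simp only [Pi.add_apply]
  ring

lemma integral_gibbsMeasure (V g : ℝ → ℝ) :
    ∫ y, g y ∂gibbsMeasure V = (∫ y, g y * exp (-V y)) / ∫ y, exp (-V y) := by
  simp only [gibbsMeasure, integral_tilted, smul_eq_mul, div_mul_eq_mul_div, integral_div,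
    mul_comm (g _)]

lemma Psi_eq_integral_gibbsMeasure (f : ℝ → ℝ) (σ : ℝ) :
    Psi f σ = ∫ y, y ∂gibbsMeasure fun y ↦ f y - σ * y := by
  simp only [Psi, integral_gibbsMeasure, neg_sub', sub_neg_eq_add]

lemma integrableExpSet_id_gibbsMeasure (hV : ∀ σ, Integrable fun y ↦ exp (-(V y - σ * y))) :
    integrableExpSet id (gibbsMeasure V) = Set.univ := by
  refine Set.eq_univ_of_forall fun σ ↦ ?_
  have hV₀ : Integrable fun y ↦ exp (-V y) := by simpa using hV 0
  refine (integrable_tilted_iff hV₀ _).2 ((hV σ).congr (ae_of_all _ fun y ↦ ?_))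
  simp only [id, smul_eq_mul, ← exp_add]
  ring_nf

lemma memLp_id_gibbsMeasure (hV : ∀ σ, Integrable fun y ↦ exp (-(V y - σ * y))) (p : NNReal) :
    MemLp id p (gibbsMeasure V) :=
  memLp_of_mem_interior_integrableExpSet (by simp [integrableExpSet_id_gibbsMeasure hV]) p

lemma hasDerivAt_Psi {f : ℝ → ℝ} (hf : ∀ σ, Integrable fun y ↦ exp (-(f y - σ * y))) (σ : ℝ) :
    HasDerivAt (Psi f) Var[id; gibbsMeasure fun y ↦ f y - σ * y] σ := by
  have hf₀ : Integrable fun y ↦ exp (-f y) := by simpa using hf 0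
  have hmem (τ : ℝ) : τ ∈ interior (integrableExpSet id (gibbsMeasure f)) := by
    simp [integrableExpSet_id_gibbsMeasure hf]
  have hPsi : Psi f = deriv (cgf id (gibbsMeasure f)) := by
    ext τ
    rw [Psi_eq_integral_gibbsMeasure, ← tilted_gibbsMeasure hf₀]
    exact integral_tilted_mul_self (hmem τ)
  have hVar : Var[id; gibbsMeasure fun y ↦ f y - σ * y]
      = deriv (deriv (cgf id (gibbsMeasure f))) σ := by
    rw [← tilted_gibbsMeasure hf₀, ← iteratedDeriv_one (f := cgf id _), ← iteratedDeriv_succ]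
    exact variance_tilted_mul (hmem σ)
  rw [hPsi, hVar]
  exact (analyticAt_cgf (hmem σ)).deriv.differentiableAt.hasDerivAt

lemma integral_mul_deriv_gibbsMeasure (hV : Integrable fun y ↦ exp (-V y))
    (hVd : Differentiable ℝ V) {u u' : ℝ → ℝ} (hu : ∀ y, HasDerivAt u (u' y) y)
    (hui : Integrable u (gibbsMeasure V)) (hui' : Integrable u' (gibbsMeasure V))
    (huV : Integrable (fun y ↦ u y * deriv V y) (gibbsMeasure V)) :
    ∫ y, u y * deriv V y ∂gibbsMeasure V = ∫ y, u' y ∂gibbsMeasure V := by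
  have hderiv (y : ℝ) : HasDerivAt (fun y ↦ exp (-V y) * u y)
      (exp (-V y) * (u' y - u y * deriv V y)) y :=
    ((hVd y).hasDerivAt.fun_neg.exp.mul (hu y)).congr_deriv (by ring)
  have hzero : ∫ y, exp (-V y) * (u' y - u y * deriv V y) = 0 :=
    integral_eq_zero_of_hasDerivAt_of_integrable hderiv
      ((integrable_tilted_iff hV _).1 (hui'.sub huV)) ((integrable_tilted_iff hV _).1 hui)
  have hsub : ∫ y, (u' y - u y * deriv V y) ∂gibbsMeasure V = 0 := by
    simp only [integral_gibbsMeasure, mul_comm _ (exp _), hzero, zero_div]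
  rw [integral_sub hui' huV] at hsub
  linarith

lemma covariance_id_deriv_gibbsMeasure (hV : Integrable fun y ↦ exp (-V y))
    (hVd : Differentiable ℝ V) (hid : MemLp id 2 (gibbsMeasure V))
    (hV' : MemLp (deriv V) 2 (gibbsMeasure V)) : cov[id, deriv V; gibbsMeasure V] = 1 := by
  have := isProbabilityMeasure_gibbsMeasure hV
  have mean_mul : ∫ y, id y * deriv V y ∂gibbsMeasure V = 1 := by
    rw [integral_mul_deriv_gibbsMeasure hV hVd hasDerivAt_id (hid.integrable one_le_two)
      (integrable_const 1) (hid.integrable_mul hV')]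
    simp
  have mean_deriv : ∫ y, deriv V y ∂gibbsMeasure V = 0 := by
    simpa using integral_mul_deriv_gibbsMeasure hV hVd (fun y ↦ hasDerivAt_const y (1 : ℝ))
      (integrable_const 1) (integrable_const 0) (by simpa using hV'.integrable one_le_two)
  rw [covariance_eq_sub hid hV', mean_deriv, mul_zero, sub_zero]
  exact mean_mul

end Gibbs

section Curvature

/-- The bounds `k₁ ≤ V'' ≤ k₂` on the second derivative, encoded as bounds on the slopes of `V'`, so
that `V` need not be twice differentiable. -/
structure HasCurvatureBounds (V : ℝ → ℝ) (k₁ k₂ : ℝ) : Prop where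
  differentiable : Differentiable ℝ V
  monotone_deriv_sub : Monotone fun y ↦ deriv V y - k₁ * y
  antitone_deriv_sub : Antitone fun y ↦ deriv V y - k₂ * y

lemma add_deriv_mul_add_sq_le_of_monotone_deriv_sub {V : ℝ → ℝ} {k : ℝ} (hV : Differentiable ℝ V)
    (hmono : Monotone fun y ↦ deriv V y - k * y) (x y : ℝ) :
    V x + deriv V x * (y - x) + k / 2 * (y - x) ^ 2 ≤ V y := by
  set g : ℝ → ℝ := fun z ↦ V z - (deriv V x * (z - x) + k / 2 * (z - x) ^ 2)
  have hg (z : ℝ) : HasDerivAt g (deriv V z - k * z + (k * x - deriv V x)) z := by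
    have hsub : HasDerivAt (fun z ↦ z - x) 1 z := (hasDerivAt_id z).sub_const x
    refine ((hV z).hasDerivAt.sub ((hsub.const_mul (deriv V x)).add
      ((hsub.pow 2).const_mul (k / 2)))).congr_deriv ?_
    push_cast
    ring
  have hconvex : ConvexOn ℝ Set.univ g := by
    refine Monotone.convexOn_univ_of_deriv (fun z ↦ (hg z).differentiableAt) ?_
    simpa only [funext fun z ↦ (hg z).deriv] using hmono.add_const (k * x - deriv V x)
  have hmin : IsMinOn g Set.univ x := by
    refine hconvex.isMinOn_of_rightDeriv_eq_zero (by simp) ?_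
    rw [(hg x).hasDerivWithinAt.derivWithin (uniqueDiffWithinAt_Ioi x)]
    ring
  have hle : g x ≤ g y := hmin (Set.mem_univ y)
  simp only [g, sub_self] at hle
  linarith

lemma integrable_exp_quadratic {a : ℝ} (ha : a < 0) (b c : ℝ) :
    Integrable fun y : ℝ ↦ exp (a * y ^ 2 + b * y + c) := by
  have h := (integrable_cexp_quadratic' (b := a) (by simpa using ha) b c).norm
  refine h.congr (ae_of_all _ fun y ↦ ?_)
  simp only [Complex.norm_exp]
  norm_cast

lemma integrable_exp_neg_of_monotone_deriv_sub {V : ℝ → ℝ} {k : ℝ} (hk : 0 < k)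
    (hV : Differentiable ℝ V) (hmono : Monotone fun y ↦ deriv V y - k * y) :
    Integrable fun y ↦ exp (-V y) := by
  have hVc := hV.continuous
  refine (integrable_exp_quadratic (a := -(k / 2)) (by linarith) (-deriv V 0) (-V 0)).mono'
    (by fun_prop) (ae_of_all _ fun y ↦ ?_)
  rw [norm_of_nonneg (exp_pos _).le, exp_le_exp]
  linarith [add_deriv_mul_add_sq_le_of_monotone_deriv_sub hV hmono 0 y]

namespace HasCurvatureBounds

variable {V : ℝ → ℝ} {k₁ k₂ : ℝ}

lemma of_deriv_deriv (hV : Differentiable ℝ V) (hV' : Differentiable ℝ (deriv V))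
    (hbound : ∀ y, k₁ ≤ deriv (deriv V) y ∧ deriv (deriv V) y ≤ k₂) :
    HasCurvatureBounds V k₁ k₂ := by
  have hderiv (k y : ℝ) : HasDerivAt (fun y ↦ deriv V y - k * y) (deriv (deriv V) y - k) y := by
    simpa using (hV' y).hasDerivAt.fun_sub ((hasDerivAt_id y).const_mul k)
  have hdiff (k : ℝ) : Differentiable ℝ fun y ↦ deriv V y - k * y :=
    fun y ↦ (hderiv k y).differentiableAt
  refine ⟨hV, monotone_of_deriv_nonneg (hdiff k₁) fun y ↦ ?_,
    antitone_of_deriv_nonpos (hdiff k₂) fun y ↦ ?_⟩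
  · simpa [(hderiv k₁ y).deriv] using (hbound y).1
  · simpa [(hderiv k₂ y).deriv] using (hbound y).2

lemma sub_const_mul (h : HasCurvatureBounds V k₁ k₂) (σ : ℝ) :
    HasCurvatureBounds (fun y ↦ V y - σ * y) k₁ k₂ := by
  have hderiv (y : ℝ) : HasDerivAt (fun y ↦ V y - σ * y) (deriv V y - σ) y := by
    simpa using (h.differentiable y).hasDerivAt.fun_sub ((hasDerivAt_id y).const_mul σ)
  have hslope (k : ℝ) : (fun y ↦ deriv (fun y ↦ V y - σ * y) y - k * y)
      = fun y ↦ deriv V y - k * y + -σ := by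
    ext y
    rw [(hderiv y).deriv]
    ring
  exact ⟨fun y ↦ (hderiv y).differentiableAt, hslope k₁ ▸ h.monotone_deriv_sub.add_const (-σ),
    hslope k₂ ▸ h.antitone_deriv_sub.add_const (-σ)⟩

lemma abs_deriv_sub_le (h : HasCurvatureBounds V k₁ k₂) (x y : ℝ) :
    |deriv V y - deriv V x| ≤ max |k₁| |k₂| * |y - x| := by
  wlog hxy : x ≤ y generalizing x y
  · rw [abs_sub_comm, abs_sub_comm y]
    exact this y x (le_of_not_ge hxy)
  have hlower : k₁ * (y - x) ≤ deriv V y - deriv V x := by linarith [h.monotone_deriv_sub hxy]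
  have hupper : deriv V y - deriv V x ≤ k₂ * (y - x) := by linarith [h.antitone_deriv_sub hxy]
  calc |deriv V y - deriv V x| ≤ max |k₁ * (y - x)| |k₂ * (y - x)| :=
        abs_le_max_abs_abs hlower hupper
    _ = max |k₁| |k₂| * |y - x| := by
        rw [abs_mul, abs_mul, max_mul_of_nonneg _ _ (abs_nonneg (y - x))]

lemma lower_le_upper (h : HasCurvatureBounds V k₁ k₂) : k₁ ≤ k₂ := by
  linarith [h.monotone_deriv_sub zero_le_one, h.antitone_deriv_sub zero_le_one]

lemma integrable_exp_neg_sub_const_mul (h : HasCurvatureBounds V k₁ k₂) (hk₁ : 0 < k₁) (σ : ℝ) :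
    Integrable fun y ↦ exp (-(V y - σ * y)) :=
  integrable_exp_neg_of_monotone_deriv_sub hk₁ (h.sub_const_mul σ).differentiable
    (h.sub_const_mul σ).monotone_deriv_sub

lemma memLp_deriv (h : HasCurvatureBounds V k₁ k₂) {p : ENNReal} {μ : Measure ℝ}
    [IsFiniteMeasure μ] (hid : MemLp id p μ) : MemLp (deriv V) p μ := by
  have hsub : MemLp (fun y ↦ deriv V y - deriv V 0) p μ :=
    hid.of_le_mul ((measurable_deriv V).sub_const _).aestronglyMeasurable
      (ae_of_all _ fun y ↦ by simpa using h.abs_deriv_sub_le 0 y)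
  simpa [Pi.add_def] using hsub.add (memLp_const (deriv V 0))

lemma variance_gibbsMeasure_mem_Icc (h : HasCurvatureBounds V k₁ k₂) (hk₁ : 0 < k₁) :
    Var[id; gibbsMeasure V] ∈ Set.Icc (1 / k₂) (1 / k₁) := by
  have hint := h.integrable_exp_neg_sub_const_mul hk₁
  have hint₀ : Integrable fun y ↦ exp (-V y) := by simpa using hint 0
  have := isProbabilityMeasure_gibbsMeasure hint₀
  have hid : MemLp id 2 (gibbsMeasure V) := memLp_id_gibbsMeasure hint 2
  have hV' : MemLp (deriv V) 2 (gibbsMeasure V) := h.memLp_deriv hid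
  have hcov := covariance_id_deriv_gibbsMeasure hint₀ h.differentiable hid hV'
  constructor
  · rw [div_le_iff₀' (hk₁.trans_le h.lower_le_upper), ← hcov]
    exact covariance_le_mul_variance_id hid hV' h.antitone_deriv_sub
  · rw [le_div_iff₀' hk₁, ← hcov]
    exact mul_variance_id_le_covariance hid hV' h.monotone_deriv_sub

lemma differentiable_Psi (h : HasCurvatureBounds V k₁ k₂) (hk₁ : 0 < k₁) :
    Differentiable ℝ (Psi V) :=
  fun σ ↦ (hasDerivAt_Psi (h.integrable_exp_neg_sub_const_mul hk₁) σ).differentiableAt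

lemma deriv_Psi_mem_Icc (h : HasCurvatureBounds V k₁ k₂) (hk₁ : 0 < k₁) (σ : ℝ) :
    deriv (Psi V) σ ∈ Set.Icc (1 / k₂) (1 / k₁) := by
  rw [(hasDerivAt_Psi (h.integrable_exp_neg_sub_const_mul hk₁) σ).deriv]
  exact (h.sub_const_mul σ).variance_gibbsMeasure_mem_Icc hk₁

end HasCurvatureBounds

end Curvature

theorem derivative_bounds_Psi_Phi_general {ψ P : ℝ → ℝ} {κ₁ κ₂ ς₁ ς₂ : ℝ}
    (hκ₁ : 0 < κ₁) (hς₁ : 0 < ς₁) (hψ : HasCurvatureBounds ψ κ₁ κ₂)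
    (hψP : HasCurvatureBounds (fun z => ψ z + P z) ς₁ ς₂) (σ : ℝ) :
    DifferentiableAt ℝ (Psi ψ) σ ∧
      1 / κ₂ ≤ deriv (Psi ψ) σ ∧ deriv (Psi ψ) σ ≤ 1 / κ₁ ∧
      DifferentiableAt ℝ (fun τ => Psi (fun z => ψ z + P z) τ - Psi ψ τ) σ ∧
      1 / ς₂ - 1 / κ₁ ≤ deriv (fun τ => Psi (fun z => ψ z + P z) τ - Psi ψ τ) σ ∧
      deriv (fun τ => Psi (fun z => ψ z + P z) τ - Psi ψ τ) σ ≤ 1 / ς₁ - 1 / κ₂ := by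
  have dψ := hψ.differentiable_Psi hκ₁ σ
  have dψP := hψP.differentiable_Psi hς₁ σ
  obtain ⟨hψ_lower, hψ_upper⟩ := hψ.deriv_Psi_mem_Icc hκ₁ σ
  obtain ⟨hψP_lower, hψP_upper⟩ := hψP.deriv_Psi_mem_Icc hς₁ σ
  rw [deriv_fun_sub dψP dψ]
  exact ⟨dψ, hψ_lower, hψ_upper, dψP.sub dψ, sub_le_sub hψP_lower hψ_upper,
    sub_le_sub hψP_upper hψ_lower⟩

/-- bounds on the derivatives of `Ψ` and `Φ = Ψ_{ψ+P} - Ψ_ψ`. -/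
theorem derivative_bounds_Psi_Phi
    (ψ P : ℝ → ℝ) (κ₁ κ₂ ς₁ ς₂ : ℝ)
    (hψ : ContDiff ℝ 2 ψ) (hP : ContDiff ℝ 2 P)
    (hκ₁ : 0 < κ₁) (hκ : κ₁ ≤ κ₂) (hς₁ : 0 < ς₁) (hς : ς₁ ≤ ς₂)
    (hψ'' : ∀ y : ℝ, κ₁ ≤ deriv (deriv ψ) y ∧ deriv (deriv ψ) y ≤ κ₂)
    (hψP'' : ∀ y : ℝ, ς₁ ≤ deriv (deriv (fun z => ψ z + P z)) y ∧
        deriv (deriv (fun z => ψ z + P z)) y ≤ ς₂) :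
    ∀ σ : ℝ,
      DifferentiableAt ℝ (Psi ψ) σ ∧
      1 / κ₂ ≤ deriv (Psi ψ) σ ∧ deriv (Psi ψ) σ ≤ 1 / κ₁ ∧
      DifferentiableAt ℝ (fun τ => Psi (fun z => ψ z + P z) τ - Psi ψ τ) σ ∧
      1 / ς₂ - 1 / κ₁ ≤ deriv (fun τ => Psi (fun z => ψ z + P z) τ - Psi ψ τ) σ ∧
      deriv (fun τ => Psi (fun z => ψ z + P z) τ - Psi ψ τ) σ ≤ 1 / ς₁ - 1 / κ₂ := by
  have hψP := hψ.add hP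
  exact derivative_bounds_Psi_Phi_general hκ₁ hς₁
    (.of_deriv_deriv (hψ.differentiable two_ne_zero) hψ.differentiable_deriv_two hψ'')
    (.of_deriv_deriv (hψP.differentiable two_ne_zero) hψP.differentiable_deriv_two hψP'')
end
end

section
/- There exist a constant C > 0 and an integer N₀ such that for all N ≥ N₀ the maximizers σ₀ and σ_P^N satisfy |σ_P^N − σ₀| ≤ C/N. -/
/-!
`Psi f σ` is the mean of the probability density proportional to `exp (-f y + σ y)`. By Chebyshev's
integral inequality the mean grows with the likelihood ratio order: if the ratio of two densities is
nondecreasing, then so are their means. This is applied twice.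

* For `τ ≤ σ` the ratio of the two tilts of `f` is `exp ((σ - τ) y)`, so `Psi f` is nondecreasing.
* If `y ↦ f y - κ / 2 * y ^ 2` is concave and `0 ≤ h`, then translating by `h` the tilt of `f` by
  `σ + κ h` gives a density whose ratio to the tilt by `σ` is nondecreasing, so
  `Psi f σ + h ≤ Psi f (σ + κ h)`: the slope of `Psi f` is at least `1 / κ`, without any
  differentiation in `σ`.

With `G = Psi ψ` and `H = Psi (ψ + P)`, the equation `G σ₀ = G s + (H s - G s) / N` rearranges to
`(N - 1) (G s - G σ₀) + (H s - H σ₀) = G σ₀ - H σ₀`. Both terms on the left have the sign of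
`s - σ₀`, and the first has size at least `(N - 1) |s - σ₀| / κ`.
-/

noncomputable section

open MeasureTheory Real

/-- Chebyshev's integral inequality for weights in likelihood ratio order: `hw` is the monotonicity
of `w₂ / w₁` with denominators cleared. -/
theorem integral_mul_mul_integral_le_of_likelihoodRatio {α : Type*} [LinearOrder α]
    [MeasurableSpace α] {μ : Measure α} [SFinite μ] {g w₁ w₂ : α → ℝ} (hg : Monotone g)
    (hw : ∀ ⦃x y⦄, x ≤ y → w₁ y * w₂ x ≤ w₁ x * w₂ y)
    (hw₁ : Integrable w₁ μ) (hw₂ : Integrable w₂ μ)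
    (hgw₁ : Integrable (fun x => g x * w₁ x) μ) (hgw₂ : Integrable (fun x => g x * w₂ x) μ) :
    (∫ x, g x * w₁ x ∂μ) * ∫ x, w₂ x ∂μ ≤ (∫ x, w₁ x ∂μ) * ∫ x, g x * w₂ x ∂μ := by
  have hpair : ∀ z : α × α, 0 ≤ (g z.2 - g z.1) * (w₁ z.1 * w₂ z.2 - w₁ z.2 * w₂ z.1) := by
    rintro ⟨x, y⟩
    rcases le_total x y with hxy | hyx
    · exact mul_nonneg (sub_nonneg.2 (hg hxy)) (sub_nonneg.2 (hw hxy))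
    · exact mul_nonneg_of_nonpos_of_nonpos (sub_nonpos.2 (hg hyx)) (sub_nonpos.2 (hw hyx))
  have hexpand : ∀ z : α × α, (g z.2 - g z.1) * (w₁ z.1 * w₂ z.2 - w₁ z.2 * w₂ z.1) =
      w₁ z.1 * (g z.2 * w₂ z.2) + (g z.1 * w₂ z.1) * w₁ z.2
        - ((g z.1 * w₁ z.1) * w₂ z.2 + w₂ z.1 * (g z.2 * w₁ z.2)) := fun z => by ring
  have hint : 0 ≤ ∫ z, (g z.2 - g z.1) * (w₁ z.1 * w₂ z.2 - w₁ z.2 * w₂ z.1) ∂μ.prod μ :=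
    integral_nonneg hpair
  simp only [hexpand] at hint
  rw [integral_sub ((hw₁.mul_prod hgw₂).fun_add (hgw₂.mul_prod hw₁))
      ((hgw₁.mul_prod hw₂).fun_add (hw₂.mul_prod hgw₁)),
    integral_add (hw₁.mul_prod hgw₂) (hgw₂.mul_prod hw₁),
    integral_add (hgw₁.mul_prod hw₂) (hw₂.mul_prod hgw₁),
    integral_prod_mul w₁ fun y => g y * w₂ y, integral_prod_mul (fun x => g x * w₂ x) w₁,
    integral_prod_mul (fun x => g x * w₁ x) w₂, integral_prod_mul w₂ fun y => g y * w₁ y] at hint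
  linarith

theorem antitone_add_sub_of_concaveOn {g : ℝ → ℝ} (hg : ConcaveOn ℝ Set.univ g) {h : ℝ}
    (hh : 0 ≤ h) : Antitone fun x => g (x + h) - g x := by
  intro x y hxy
  -- `y` and `x + h` are mirror-image convex combinations of `x` and `y + h`.
  have hmem : y ∈ segment ℝ x (y + h) := by
    rw [segment_eq_Icc (by linarith)]
    exact ⟨hxy, by linarith⟩
  obtain ⟨a, b, ha, hb, hab, hy⟩ := hmem
  have hmirror : b • x + a • (y + h) = x + h := by
    simp only [smul_eq_mul] at hy ⊢
    linear_combination (x + (y + h)) * hab - hy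
  have hy_le := hg.2 (Set.mem_univ x) (Set.mem_univ (y + h)) ha hb hab
  have hmirror_le := hg.2 (Set.mem_univ x) (Set.mem_univ (y + h)) hb ha (by linarith)
  rw [hy] at hy_le
  rw [hmirror] at hmirror_le
  simp only [smul_eq_mul] at hy_le hmirror_le
  linear_combination hy_le + hmirror_le - (g x + g (y + h)) * hab

section SecondDerivative

variable {f : ℝ → ℝ} {κ : ℝ}

theorem deriv_sub_mul_sq (hf : Differentiable ℝ f) (κ : ℝ) :
    deriv (fun y => f y - κ / 2 * y ^ 2) = fun y => deriv f y - κ * y := by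
  ext y
  refine HasDerivAt.deriv (((hf y).hasDerivAt.fun_sub
    ((hasDerivAt_pow 2 y).const_mul (κ / 2))).congr_deriv ?_)
  norm_num
  ring

theorem deriv_deriv_sub_mul_sq (hf : Differentiable ℝ f) (hf' : Differentiable ℝ (deriv f))
    (κ y : ℝ) : deriv (deriv fun y => f y - κ / 2 * y ^ 2) y = deriv (deriv f) y - κ := by
  rw [deriv_sub_mul_sq hf]
  simpa using ((hf' y).hasDerivAt.fun_sub ((hasDerivAt_id' y).const_mul κ)).deriv

theorem convexOn_sub_mul_sq (hf : Differentiable ℝ f) (hf' : Differentiable ℝ (deriv f))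
    (h : ∀ y, κ ≤ deriv (deriv f) y) : ConvexOn ℝ Set.univ fun y => f y - κ / 2 * y ^ 2 := by
  refine convexOn_univ_of_deriv2_nonneg (by fun_prop) ?_ fun y =>
    (sub_nonneg.2 (h y)).trans_eq (deriv_deriv_sub_mul_sq hf hf' κ y).symm
  rw [deriv_sub_mul_sq hf]
  fun_prop

theorem concaveOn_sub_mul_sq (hf : Differentiable ℝ f) (hf' : Differentiable ℝ (deriv f))
    (h : ∀ y, deriv (deriv f) y ≤ κ) : ConcaveOn ℝ Set.univ fun y => f y - κ / 2 * y ^ 2 := by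
  refine concaveOn_univ_of_deriv2_nonpos (by fun_prop) ?_ fun y =>
    (deriv_deriv_sub_mul_sq hf hf' κ y).trans_le (sub_nonpos.2 (h y))
  rw [deriv_sub_mul_sq hf]
  fun_prop

end SecondDerivative

/-- Finiteness of the partition function of the potential `f` at every tilt `σ`. -/
def IntegrableTilts (f : ℝ → ℝ) : Prop :=
  ∀ σ : ℝ, Integrable fun y => exp (-f y + σ * y)

namespace IntegrableTilts

variable {f g : ℝ → ℝ}

theorem comp_add_right (hf : IntegrableTilts f) (h : ℝ) :
    IntegrableTilts fun y => f (y + h) := by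
  intro σ
  refine (((hf σ).comp_add_right h).mul_const (exp (-(σ * h)))).congr (.of_forall fun y => ?_)
  simp only [← exp_add]
  ring_nf

theorem integrable_mul_exp (hf : IntegrableTilts f) (σ : ℝ) :
    Integrable fun y => y * exp (-f y + σ * y) := by
  refine ((hf (σ + 1)).add (hf (σ - 1))).mono'
    (continuous_id.aestronglyMeasurable.mul (hf σ).aestronglyMeasurable) (.of_forall fun y => ?_)
  have hy : |y| ≤ exp y + exp (-y) :=
    ((lt_add_one _).le.trans (add_one_le_exp _)).trans (exp_abs_le y)
  calc ‖y * exp (-f y + σ * y)‖ = |y| * exp (-f y + σ * y) := by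
        rw [norm_eq_abs, abs_mul, abs_exp]
    _ ≤ (exp y + exp (-y)) * exp (-f y + σ * y) := by gcongr
    _ = exp (-f y + (σ + 1) * y) + exp (-f y + (σ - 1) * y) := by
        rw [add_mul, ← exp_add, ← exp_add]
        ring_nf

theorem Psi_le_Psi (hf : IntegrableTilts f) (hg : IntegrableTilts g) {τ σ : ℝ}
    (hfg : Monotone fun y => f y - g y + (σ - τ) * y) : Psi f τ ≤ Psi g σ := by
  refine (div_le_div_iff₀ (integral_exp_pos (hf τ)) (integral_exp_pos (hg σ))).2 ?_
  rw [mul_comm (∫ y, y * exp (-g y + σ * y))]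
  refine integral_mul_mul_integral_le_of_likelihoodRatio monotone_id (fun x y hxy => ?_)
    (hf τ) (hg σ) (hf.integrable_mul_exp τ) (hg.integrable_mul_exp σ)
  rw [← exp_add, ← exp_add, exp_le_exp]
  linarith [hfg hxy]

theorem monotone_Psi (hf : IntegrableTilts f) : Monotone (Psi f) := by
  refine fun τ σ hτσ => hf.Psi_le_Psi hf ?_
  simpa only [sub_self, zero_add] using monotone_mul_left_of_nonneg (sub_nonneg.2 hτσ)

theorem Psi_comp_add_right (hf : IntegrableTilts f) (h σ : ℝ) :
    Psi (fun y => f (y + h)) σ = Psi f σ - h := by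
  have hweight : ∀ y, exp (-f (y + h) + σ * y) =
      exp (-f (y + h) + σ * (y + h)) * exp (-(σ * h)) := fun y => by
    rw [← exp_add]
    ring_nf
  have hmass : ∫ y, exp (-f (y + h) + σ * y) =
      (∫ y, exp (-f y + σ * y)) * exp (-(σ * h)) := by
    simp only [hweight, integral_mul_const]
    rw [integral_add_right_eq_self fun y => exp (-f y + σ * y)]
  have hmoment : ∫ y, y * exp (-f (y + h) + σ * y) =
      (∫ y, (y - h) * exp (-f y + σ * y)) * exp (-(σ * h)) := by
    rw [← integral_add_right_eq_self (fun y => (y - h) * exp (-f y + σ * y)) h]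
    simp only [hweight, add_sub_cancel_right, ← mul_assoc, integral_mul_const]
  have hsplit : ∫ y, (y - h) * exp (-f y + σ * y) =
      (∫ y, y * exp (-f y + σ * y)) - h * ∫ y, exp (-f y + σ * y) := by
    simp only [sub_mul]
    rw [integral_sub (hf.integrable_mul_exp σ) ((hf σ).const_mul h), integral_const_mul]
  have hpos : 0 < ∫ y, exp (-f y + σ * y) := integral_exp_pos (hf σ)
  rw [Psi, hmass, hmoment, mul_div_mul_right _ _ (exp_ne_zero _), hsplit, sub_div,
    mul_div_cancel_right₀ _ hpos.ne', Psi]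

theorem Psi_add_le (hf : IntegrableTilts f) {κ : ℝ}
    (hconc : ConcaveOn ℝ Set.univ fun y => f y - κ / 2 * y ^ 2) {h : ℝ} (hh : 0 ≤ h) (σ : ℝ) :
    Psi f σ + h ≤ Psi f (σ + κ * h) := by
  rw [← le_sub_iff_add_le, ← hf.Psi_comp_add_right]
  refine hf.Psi_le_Psi (hf.comp_add_right h) fun x y hxy => ?_
  linarith [antitone_add_sub_of_concaveOn hconc hh hxy]

theorem sub_le_mul_Psi_sub (hf : IntegrableTilts f) {κ : ℝ} (hκ : 0 < κ)
    (hconc : ConcaveOn ℝ Set.univ fun y => f y - κ / 2 * y ^ 2) {τ σ : ℝ} (hτσ : τ ≤ σ) :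
    σ - τ ≤ κ * (Psi f σ - Psi f τ) := by
  have hstep := hf.Psi_add_le hconc (div_nonneg (sub_nonneg.2 hτσ) hκ.le) τ
  rw [mul_div_cancel₀ _ hκ.ne', add_sub_cancel] at hstep
  rw [← div_le_iff₀' hκ]
  linarith

end IntegrableTilts

theorem integrable_exp_neg_mul_sq_add_mul {b : ℝ} (hb : 0 < b) (c d : ℝ) :
    Integrable fun y : ℝ => exp (-b * y ^ 2 + c * y + d) := by
  have := (integrable_cexp_quadratic (b := b) (by simpa using hb) c d).re
  refine this.congr (.of_forall fun y => ?_)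
  simp only [← Complex.exp_ofReal_re]
  push_cast
  rfl

theorem integrableTilts_of_convexOn {f : ℝ → ℝ} {κ : ℝ} (hκ : 0 < κ)
    (hconv : ConvexOn ℝ Set.univ fun y => f y - κ / 2 * y ^ 2) : IntegrableTilts f := by
  intro σ
  have hcont : Continuous fun y => f y - κ / 2 * y ^ 2 := hconv.locallyLipschitz.continuous
  have hf : Continuous f := (hcont.fun_add
    (by fun_prop : Continuous fun y => κ / 2 * y ^ 2)).congr fun y => sub_add_cancel _ _
  obtain ⟨c, d, hcd⟩ := hconv.exists_affine_le_real isClosed_univ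
    (hcont.lowerSemicontinuous.lowerSemicontinuousOn _)
  refine (integrable_exp_neg_mul_sq_add_mul (half_pos hκ) (σ - c) (-d)).mono'
    (by fun_prop : Continuous fun y => exp (-f y + σ * y)).aestronglyMeasurable
    (.of_forall fun y => ?_)
  rw [norm_eq_abs, abs_exp, exp_le_exp]
  linarith [hcd y (Set.mem_univ y)]

theorem integrableTilts_of_le_deriv_deriv {f : ℝ → ℝ} (hf : Differentiable ℝ f)
    (hf' : Differentiable ℝ (deriv f)) {κ : ℝ} (hκ : 0 < κ) (h : ∀ y, κ ≤ deriv (deriv f) y) :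
    IntegrableTilts f :=
  integrableTilts_of_convexOn hκ (convexOn_sub_mul_sq hf hf' h)

theorem abs_sub_le_of_eq_add_inv_mul {G H : ℝ → ℝ} {κ : ℝ} (hκ : 0 ≤ κ)
    (hG : ∀ ⦃x y⦄, x ≤ y → y - x ≤ κ * (G y - G x)) (hH : Monotone H) {N : ℝ} (hN : 1 < N)
    {x x₀ : ℝ} (hx : G x₀ = G x + N⁻¹ * (H x - G x)) :
    |x - x₀| ≤ κ * |H x₀ - G x₀| / (N - 1) := by
  have hN0 : 0 < N - 1 := sub_pos.2 hN
  have hbalance : (N - 1) * (G x - G x₀) + (H x - H x₀) = G x₀ - H x₀ := by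
    field_simp at hx
    linarith
  rw [le_div_iff₀' hN0]
  rcases le_total x₀ x with hle | hle
  · calc (N - 1) * |x - x₀| = (N - 1) * (x - x₀) := by rw [abs_of_nonneg (sub_nonneg.2 hle)]
      _ ≤ (N - 1) * (κ * (G x - G x₀)) := by gcongr; exact hG hle
      _ = κ * ((N - 1) * (G x - G x₀)) := by ring
      _ ≤ κ * |H x₀ - G x₀| := by
        gcongr
        linarith [hH hle, neg_le_abs (H x₀ - G x₀)]
  · calc (N - 1) * |x - x₀| = (N - 1) * (x₀ - x) := by
          rw [abs_sub_comm, abs_of_nonneg (sub_nonneg.2 hle)]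
      _ ≤ (N - 1) * (κ * (G x₀ - G x)) := by gcongr; exact hG hle
      _ = κ * ((N - 1) * (G x₀ - G x)) := by ring
      _ ≤ κ * |H x₀ - G x₀| := by
        gcongr
        linarith [hH hle, le_abs_self (H x₀ - G x₀)]

theorem maximizer_closeness_general {ψ φ : ℝ → ℝ} {κ : ℝ} (hκ : 0 < κ)
    (hψ : IntegrableTilts ψ) (hφ : IntegrableTilts φ)
    (hconc : ConcaveOn ℝ Set.univ fun y => ψ y - κ / 2 * y ^ 2)
    {A σ₀ : ℝ} (hσ₀ : A = Psi ψ σ₀) {σP : ℕ → ℝ}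
    (hσP : ∀ N : ℕ, 2 ≤ N → A = Psi ψ (σP N) + (N : ℝ)⁻¹ * (Psi φ (σP N) - Psi ψ (σP N))) :
    ∃ C > 0, ∃ N₀ : ℕ, ∀ N : ℕ, N₀ ≤ N → |σP N - σ₀| ≤ C / N := by
  refine ⟨2 * κ * |Psi φ σ₀ - Psi ψ σ₀| + 1, by positivity, 2, fun N hN => ?_⟩
  have hN' : (2 : ℝ) ≤ N := by exact_mod_cast hN
  calc |σP N - σ₀| ≤ κ * |Psi φ σ₀ - Psi ψ σ₀| / (N - 1) :=
        abs_sub_le_of_eq_add_inv_mul hκ.le (fun _ _ => hψ.sub_le_mul_Psi_sub hκ hconc)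
          hφ.monotone_Psi (by linarith) (hσ₀ ▸ hσP N hN)
    _ ≤ κ * |Psi φ σ₀ - Psi ψ σ₀| / (N / 2) := by
        gcongr
        linarith
    _ = 2 * κ * |Psi φ σ₀ - Psi ψ σ₀| / N := by ring
    _ ≤ (2 * κ * |Psi φ σ₀ - Psi ψ σ₀| + 1) / N := by
        gcongr
        exact (lt_add_one _).le

/-- `|σ_P^N - σ₀| ≤ C/N` for `N` large, where `σ₀` solves `A = Ψ(σ₀)` and
`σ_P^N` solves `A = Ψ(σ_P^N) + (1/N) Φ(σ_P^N)` with `Φ = Ψ_{ψ+P} - Ψ_ψ`. -/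
theorem maximizer_closeness
    (ψ P : ℝ → ℝ) (κ₁ κ₂ ς₁ ς₂ : ℝ)
    (hψ : ContDiff ℝ 2 ψ) (hP : ContDiff ℝ 2 P)
    (hκ₁ : 0 < κ₁) (hκ : κ₁ ≤ κ₂) (hς₁ : 0 < ς₁) (hς : ς₁ ≤ ς₂)
    (hψ'' : ∀ y : ℝ, κ₁ ≤ deriv (deriv ψ) y ∧ deriv (deriv ψ) y ≤ κ₂)
    (hψP'' : ∀ y : ℝ, ς₁ ≤ deriv (deriv (fun z => ψ z + P z)) y ∧
        deriv (deriv (fun z => ψ z + P z)) y ≤ ς₂)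
    (A σ₀ : ℝ) (hσ₀ : A = Psi ψ σ₀)
    (σP : ℕ → ℝ)
    (hσP : ∀ N : ℕ, 2 ≤ N →
      A = Psi ψ (σP N) + (N : ℝ)⁻¹ * (Psi (fun z => ψ z + P z) (σP N) - Psi ψ (σP N))) :
    ∃ C > 0, ∃ N₀ : ℕ, ∀ N : ℕ, N₀ ≤ N → |σP N - σ₀| ≤ C / N := by
  have hd := hψ.differentiable two_ne_zero
  have hφ := hψ.add hP
  exact maximizer_closeness_general (hκ₁.trans_le hκ)
    (integrableTilts_of_le_deriv_deriv hd hψ.differentiable_deriv_two hκ₁ fun y => (hψ'' y).1)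
    (integrableTilts_of_le_deriv_deriv (hφ.differentiable two_ne_zero) hφ.differentiable_deriv_two
      hς₁ fun y => (hψP'' y).1)
    (concaveOn_sub_mul_sq hd hψ.differentiable_deriv_two fun y => (hψ'' y).2) hσ₀ hσP
end
end

section
/- There exist a constant C > 0 and an integer N₀ such that for all N ≥ N₀, | log( g^P_{N,A}(0) / g_{N,A}(0) ) | ≤ C/N. -/
noncomputable section

open MeasureTheory Real

/-!
The laws of the `Y_i` are exponential tilts, by `δ_N = σ_P^N - σ₀`, of the Gibbs measures `μ` and
`ν` of `ψ` and `ψ + P` at `σ₀`. Inverting the Laplace transform along the line that undoes the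
tilt expresses the two densities at `0` as

  `g_N(0) = √N / (2π) ∫ Re (φ_μ ^ N)`  and  `g_N^P(0) = exp S_N √N / (2π) ∫ Re (φ_ν φ_μ ^ (N-1))`,

where `φ_μ` and `φ_ν` are the characteristic functions after shifting both measures by `A`, the
mean of `μ`, and `S_N = N A δ_N - log E_ν exp (δ_N y) - (N-1) log E_μ exp (δ_N y)`.

The exponent `S_N` is the maximal value of a function of the tilt that vanishes at `0`, so it is
nonnegative; by the lower bound on the variance of the tilts of `μ` that function lies below a
parabola whose maximum is `O(1/N)`. As for the integrals, `∫ Re (φ_μ ^ N)` is of order `N ^ (-1/2)`,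
and replacing one factor `φ_μ` by `φ_ν` changes it by `O(N ^ (-3/2))`: the real part of `φ_ν - φ_μ`
is `O(t²)`, and the imaginary part, although only `O(t)`, is paired with the imaginary part of
`φ_μ ^ (N-1)`, which is `O(N t³)` because `φ_μ` is centred. The decay `|φ_μ|² ≤ (1 + t²/K)⁻¹`, with
`K` a bound for `|ψ''|`, follows from integration by parts against the score and Cauchy–Schwarz.
-/

section

open ProbabilityTheory Filter Asymptotics
open scoped Topology

/-! ### Exponential tilts and their cumulant generating functions -/

lemma add_deriv_mul_sub_add_sq_le {f : ℝ → ℝ} {κ : ℝ} (hf : ContDiff ℝ 2 f)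
    (hκ : ∀ y, κ ≤ deriv (deriv f) y) (x y : ℝ) :
    f x + deriv f x * (y - x) + κ / 2 * (y - x) ^ 2 ≤ f y := by
  let g : ℝ → ℝ := fun z => f z - (deriv f x * (z - x) + κ / 2 * (z - x) ^ 2)
  let g' : ℝ → ℝ := fun z => deriv f z - (deriv f x + κ * (z - x))
  have hg (z : ℝ) : HasDerivAt g (g' z) z := by
    have hid := (hasDerivAt_id z).sub_const x
    convert! ((hf.differentiable two_ne_zero z).hasDerivAt).sub
      ((hid.const_mul (deriv f x)).add ((hid.pow 2).const_mul (κ / 2))) using 1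
    simp [g']
    ring
  have hg' (z : ℝ) : HasDerivAt g' (deriv (deriv f) z - κ) z := by
    convert! (hf.differentiable_deriv_two z).hasDerivAt.sub
      ((((hasDerivAt_id z).sub_const x).const_mul κ).const_add (deriv f x)) using 1
    rw [mul_one]
  have hconvex : ConvexOn ℝ Set.univ g :=
    convexOn_of_hasDerivWithinAt2_nonneg convex_univ
      (fun z _ => (hg z).continuousAt.continuousWithinAt) (fun z _ => (hg z).hasDerivWithinAt)
      (fun z _ => (hg' z).hasDerivWithinAt) (fun z _ => sub_nonneg.2 (hκ z))
  have hmin : IsMinOn g Set.univ x := hconvex.isMinOn_of_rightDeriv_eq_zero (by simp) <| by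
    simpa [g'] using (hg x).hasDerivWithinAt.derivWithin (uniqueDiffWithinAt_Ioi x)
  have := hmin (Set.mem_univ y)
  simp only [g, Set.mem_ofPred_eq, sub_self] at this
  linarith

section ExponentialTilts

variable {μ : Measure ℝ}

lemma mem_interior_integrableExpSet_id (hμ : ∀ t, Integrable (fun y => exp (t * y)) μ) (t : ℝ) :
    t ∈ interior (integrableExpSet id μ) := by
  have : integrableExpSet id μ = Set.univ := Set.eq_univ_of_forall hμ
  simp [this]

lemma memLp_id_of_integrable_exp (hμ : ∀ t, Integrable (fun y => exp (t * y)) μ) (p : NNReal) :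
    MemLp id p μ :=
  memLp_of_mem_interior_integrableExpSet (mem_interior_integrableExpSet_id hμ 0) p

lemma contDiff_cgf_id (hμ : ∀ t, Integrable (fun y => exp (t * y)) μ) :
    ContDiff ℝ 2 (cgf id μ) :=
  contDiff_iff_contDiffAt.2 fun t =>
    (analyticAt_cgf (mem_interior_integrableExpSet_id hμ t)).contDiffAt

lemma deriv_cgf_id (hμ : ∀ t, Integrable (fun y => exp (t * y)) μ) (t : ℝ) :
    deriv (cgf id μ) t = ∫ y, y ∂μ.tilted (t * ·) :=
  (integral_tilted_mul_self (mem_interior_integrableExpSet_id hμ t)).symm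

lemma mul_integral_add_mul_sq_le_cgf [IsProbabilityMeasure μ] {c : ℝ}
    (hμ : ∀ t, Integrable (fun y => exp (t * y)) μ)
    (hc : ∀ t, c ≤ Var[id; μ.tilted (t * ·)]) (t : ℝ) :
    t * ∫ y, y ∂μ + c / 2 * t ^ 2 ≤ cgf id μ t := by
  have hdd (s : ℝ) : c ≤ deriv (deriv (cgf id μ)) s := by
    have := variance_tilted_mul (mem_interior_integrableExpSet_id hμ s)
    rw [iteratedDeriv_succ, iteratedDeriv_one] at this
    exact this ▸ hc s
  have := add_deriv_mul_sub_add_sq_le (contDiff_cgf_id hμ) hdd 0 t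
  simp only [cgf_zero, deriv_cgf_id hμ, zero_mul, tilted_const, sub_zero] at this
  linarith

lemma mul_integral_le_cgf [IsProbabilityMeasure μ]
    (hμ : ∀ t, Integrable (fun y => exp (t * y)) μ) (t : ℝ) :
    t * ∫ y, y ∂μ ≤ cgf id μ t := by
  simpa using mul_integral_add_mul_sq_le_cgf hμ (fun _ => variance_nonneg _ _) t

variable {ν : Measure ℝ}

lemma integral_tilted_add_mul_integral_tilted_eq {r B t₀ : ℝ}
    (hμ : ∀ t, Integrable (fun y => exp (t * y)) μ)
    (hν : ∀ t, Integrable (fun y => exp (t * y)) ν)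
    (hmax : ∀ t, t * B - (cgf id μ t + r * cgf id ν t) ≤
      t₀ * B - (cgf id μ t₀ + r * cgf id ν t₀)) :
    ∫ y, y ∂μ.tilted (t₀ * ·) + r * ∫ y, y ∂ν.tilted (t₀ * ·) = B := by
  have hd {ρ : Measure ℝ} (hρ : ∀ t, Integrable (fun y => exp (t * y)) ρ) :
      HasDerivAt (cgf id ρ) (∫ y, y ∂ρ.tilted (t₀ * ·)) t₀ :=
    deriv_cgf_id hρ t₀ ▸ ((contDiff_cgf_id hρ).differentiable two_ne_zero t₀).hasDerivAt
  have := (IsLocalMax.hasDerivAt_eq_zero (Eventually.of_forall hmax)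
    (((hasDerivAt_id t₀).mul_const B).sub ((hd hμ).add ((hd hν).const_mul r))))
  linarith

/- The linear terms in `t` cancel up to the single discrepancy `A - ∫ y ∂μ`, so maximising the
remaining concave parabola in `t` leaves only `O(1/r)`. -/
lemma mul_sub_cgf_add_mul_cgf_le [IsProbabilityMeasure μ] [IsProbabilityMeasure ν] {K r : ℝ}
    (hK : 0 < K) (hr : 0 < r) (hμ : ∀ t, Integrable (fun y => exp (t * y)) μ)
    (hν : ∀ t, Integrable (fun y => exp (t * y)) ν)
    (hvar : ∀ t, K⁻¹ ≤ Var[id; ν.tilted (t * ·)]) (t : ℝ) :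
    t * ((1 + r) * ∫ y, y ∂ν) - (cgf id μ t + r * cgf id ν t) ≤
      K * (∫ y, y ∂ν - ∫ y, y ∂μ) ^ 2 / (2 * r) := by
  set D := ∫ y, y ∂ν - ∫ y, y ∂μ with hD
  have hparabola : t * D - r * (K⁻¹ / 2 * t ^ 2) ≤ K * D ^ 2 / (2 * r) := by
    have : K * D ^ 2 / (2 * r) - (t * D - r * (K⁻¹ / 2 * t ^ 2)) =
        (K * D - r * t) ^ 2 / (2 * r * K) := by
      field_simp
      ring
    have : 0 ≤ (K * D - r * t) ^ 2 / (2 * r * K) := by positivity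
    linarith
  have hμt := mul_integral_le_cgf hμ t
  have hνt := mul_le_mul_of_nonneg_left (mul_integral_add_mul_sq_le_cgf hν hvar t) hr.le
  have : t * D = t * ∫ y, y ∂ν - t * ∫ y, y ∂μ := by rw [hD, mul_sub]
  linarith

end ExponentialTilts

/-! ### Gibbs measures and the decay of their characteristic functions -/

section Gibbs

variable {V : ℝ → ℝ}

lemma gibbs_eq_tilted (V : ℝ → ℝ) (σ : ℝ) : gibbs V σ = volume.tilted fun y => σ * y - V y := by
  simp only [gibbs, Measure.tilted, div_eq_inv_mul]

lemma gibbsMean_eq_integral (V : ℝ → ℝ) (σ : ℝ) : gibbsMean V σ = ∫ y, y ∂gibbs V σ := by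
  rw [gibbs_eq_tilted, integral_tilted, gibbsMean, ← integral_div]
  congr with y
  rw [smul_eq_mul]
  ring

variable (hV : ∀ σ, Integrable fun y => exp (σ * y - V y))

include hV

lemma isProbabilityMeasure_gibbs (σ : ℝ) : IsProbabilityMeasure (gibbs V σ) :=
  gibbs_eq_tilted V σ ▸ isProbabilityMeasure_tilted (hV σ)

lemma tilted_gibbs (σ t : ℝ) : (gibbs V σ).tilted (t * ·) = gibbs V (σ + t) := by
  rw [gibbs_eq_tilted, gibbs_eq_tilted, tilted_tilted (hV σ)]
  congr 1 with y
  rw [Pi.add_apply]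
  ring

lemma integrable_exp_mul_gibbs (σ t : ℝ) : Integrable (fun y => exp (t * y)) (gibbs V σ) := by
  rw [gibbs_eq_tilted, integrable_tilted_iff (hV σ)]
  refine (hV (σ + t)).congr (Eventually.of_forall fun y => ?_)
  simp only [smul_eq_mul, ← exp_add]
  ring_nf

lemma cgf_id_gibbs (σ t : ℝ) : cgf id (gibbs V σ) t =
    log (∫ y, exp ((σ + t) * y - V y)) - log (∫ y, exp (σ * y - V y)) := by
  rw [cgf, mgf, gibbs_eq_tilted, integral_exp_tilted,
    log_div (integral_exp_pos _).ne' (integral_exp_pos (hV σ)).ne']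
  · congr with y
    simp only [Pi.add_apply, id_eq]
    ring_nf
  · refine (hV (σ + t)).congr (Eventually.of_forall fun y => ?_)
    simp only [Pi.add_apply, id_eq]
    ring_nf

/- Integration by parts: `(V' - σ) e^{σ y - V}` is minus the derivative of the density. -/
lemma integral_deriv_sub_smul_gibbs {E : Type*} [NormedAddCommGroup E] [NormedSpace ℝ E]
    (hV' : Differentiable ℝ V) (σ : ℝ) {f f' : ℝ → E} (hff' : ∀ y, HasDerivAt f (f' y) y)
    (hf : Integrable f (gibbs V σ)) (hf' : Integrable f' (gibbs V σ))
    (hVf : Integrable (fun y => (deriv V y - σ) • f y) (gibbs V σ)) :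
    ∫ y, (deriv V y - σ) • f y ∂gibbs V σ = ∫ y, f' y ∂gibbs V σ := by
  have hdensity (y : ℝ) : HasDerivAt (fun y => exp (σ * y - V y) • f y)
      (exp (σ * y - V y) • (f' y - (deriv V y - σ) • f y)) y := by
    have hexp := (((hasDerivAt_id y).const_mul σ).sub (hV' y).hasDerivAt).exp
    convert! hexp.smul (hff' y) using 1
    simp only [smul_sub, smul_smul, id_eq, mul_one, Pi.sub_apply, mul_sub, sub_smul]
    abel
  have hint : ∫ y, (f' y - (deriv V y - σ) • f y) ∂gibbs V σ = 0 := by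
    have hdiff := hf'.sub hVf
    rw [gibbs_eq_tilted, integrable_tilted_iff (hV σ)] at hf hdiff
    simp only [gibbs_eq_tilted, integral_tilted, div_eq_inv_mul, mul_smul, integral_smul]
    rw [integral_eq_zero_of_hasDerivAt_of_integrable hdensity hdiff hf, smul_zero]
  rw [integral_sub hf' hVf, sub_eq_zero] at hint
  exact hint.symm

end Gibbs

lemma norm_integral_mul_sq_le {α 𝕜 : Type*} [MeasurableSpace α] [RCLike 𝕜] {μ : Measure α}
    {f g : α → 𝕜} (hf : MemLp f 2 μ) (hg : MemLp g 2 μ) :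
    ‖∫ x, f x * g x ∂μ‖ ^ 2 ≤ (∫ x, ‖f x‖ ^ 2 ∂μ) * ∫ x, ‖g x‖ ^ 2 ∂μ := by
  have hholder : ∫ x, ‖f x‖ * ‖g x‖ ∂μ ≤ √(∫ x, ‖f x‖ ^ 2 ∂μ) * √(∫ x, ‖g x‖ ^ 2 ∂μ) := by
    simpa [sqrt_eq_rpow] using integral_mul_norm_le_Lp_mul_Lq (p := 2) (q := 2) .two_two
      (by simpa using hf) (by simpa using hg)
  calc ‖∫ x, f x * g x ∂μ‖ ^ 2
      ≤ (√(∫ x, ‖f x‖ ^ 2 ∂μ) * √(∫ x, ‖g x‖ ^ 2 ∂μ)) ^ 2 := by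
        gcongr
        exact (norm_integral_le_integral_norm _).trans (by simpa only [norm_mul] using hholder)
    _ = (∫ x, ‖f x‖ ^ 2 ∂μ) * ∫ x, ‖g x‖ ^ 2 ∂μ := by
        rw [mul_pow, sq_sqrt (by positivity), sq_sqrt (by positivity)]

lemma norm_cexp_mul_I (t y : ℝ) : ‖Complex.exp (t * y * Complex.I)‖ = 1 := by
  rw [← Complex.ofReal_mul, Complex.norm_exp_ofReal_mul_I]

lemma integrable_cexp_mul_I (μ : Measure ℝ) [IsFiniteMeasure μ] (t : ℝ) :
    Integrable (fun y : ℝ => Complex.exp (t * y * Complex.I)) μ :=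
  .of_bound (by fun_prop) 1 (Eventually.of_forall fun y => (norm_cexp_mul_I t y).le)

lemma memLp_cexp_mul_I_sub (μ : Measure ℝ) [IsFiniteMeasure μ] (t : ℝ) (z : ℂ) (p : ENNReal) :
    MemLp (fun y : ℝ => Complex.exp (t * y * Complex.I) - z) p μ :=
  .of_bound (by fun_prop) (1 + ‖z‖) (Eventually.of_forall fun y =>
    (norm_sub_le _ _).trans_eq (by rw [norm_cexp_mul_I]))

lemma integral_norm_exp_sub_charFun_sq (μ : Measure ℝ) [IsProbabilityMeasure μ] (t : ℝ) :
    ∫ y : ℝ, ‖Complex.exp (t * y * Complex.I) - charFun μ t‖ ^ 2 ∂μ = 1 - ‖charFun μ t‖ ^ 2 := by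
  have hprod := (integrable_cexp_mul_I μ t).mul_const ((starRingEnd ℂ) (charFun μ t))
  have hexpand (y : ℝ) : ‖Complex.exp (t * y * Complex.I) - charFun μ t‖ ^ 2 =
      1 + ‖charFun μ t‖ ^ 2 -
        2 * Complex.reCLM (Complex.exp (t * y * Complex.I) * (starRingEnd ℂ) (charFun μ t)) := by
    rw [← Complex.normSq_eq_norm_sq, ← Complex.normSq_eq_norm_sq, Complex.normSq_sub,
      Complex.normSq_eq_norm_sq (Complex.exp _), norm_cexp_mul_I, one_pow, Complex.reCLM_apply]
  simp only [hexpand]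
  rw [integral_sub (integrable_const _) ((Complex.reCLM.integrable_comp hprod).const_mul 2),
    integral_const_mul, Complex.reCLM.integral_comp_comm hprod, integral_mul_const,
    ← charFun_apply_real, Complex.mul_conj, Complex.reCLM_apply, Complex.ofReal_re,
    Complex.normSq_eq_norm_sq, integral_const, probReal_univ, one_smul]
  ring

section Score

variable {V : ℝ → ℝ} {K : ℝ} (hV : ∀ σ, Integrable fun y => exp (σ * y - V y))
  (hV₂ : ContDiff ℝ 2 V) (hK : ∀ y, |deriv (deriv V) y| ≤ K)

include hV₂ hK in
lemma abs_deriv_le_add_mul_abs (y : ℝ) : |deriv V y| ≤ |deriv V 0| + K * |y| := by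
  have hmvt := Convex.norm_image_sub_le_of_norm_deriv_le (s := Set.univ) (f := deriv V)
    (fun z _ => hV₂.differentiable_deriv_two z) (fun z _ => hK z) convex_univ
    (Set.mem_univ 0) (Set.mem_univ y)
  rw [norm_eq_abs, norm_eq_abs, sub_zero] at hmvt
  linarith [abs_sub_abs_le_abs_sub (deriv V y) (deriv V 0)]

include hV hV₂ hK

lemma memLp_deriv_sub_gibbs (σ : ℝ) : MemLp (fun y => deriv V y - σ) 2 (gibbs V σ) := by
  have := isProbabilityMeasure_gibbs hV σ
  have hid : MemLp id 2 (gibbs V σ) :=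
    memLp_id_of_integrable_exp (integrable_exp_mul_gibbs hV σ) 2
  refine MemLp.sub ?_ (memLp_const σ)
  exact ((memLp_const |deriv V 0|).add (hid.norm.const_mul K)).mono'
    (hV₂.continuous_deriv one_le_two).aestronglyMeasurable
    (Eventually.of_forall (abs_deriv_le_add_mul_abs hV₂ hK))

lemma integral_deriv_sub_sq_gibbs_le (σ : ℝ) : ∫ y, (deriv V y - σ) ^ 2 ∂gibbs V σ ≤ K := by
  have := isProbabilityMeasure_gibbs hV σ
  have hscore := memLp_deriv_sub_gibbs hV hV₂ hK σ
  have hV'' : Integrable (deriv (deriv V)) (gibbs V σ) :=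
    .of_bound (measurable_deriv _).aestronglyMeasurable K (Eventually.of_forall hK)
  calc ∫ y, (deriv V y - σ) ^ 2 ∂gibbs V σ
      = ∫ y, (deriv V y - σ) • (deriv V y - σ) ∂gibbs V σ := by simp only [smul_eq_mul, sq]
    _ = ∫ y, deriv (deriv V) y ∂gibbs V σ :=
        integral_deriv_sub_smul_gibbs hV (hV₂.differentiable two_ne_zero) σ
          (fun y => (hV₂.differentiable_deriv_two y).hasDerivAt.sub_const σ)
          (hscore.integrable one_le_two) hV'' (hscore.integrable_mul hscore)
    _ ≤ ∫ _, K ∂gibbs V σ :=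
        integral_mono hV'' (integrable_const K) fun y => (le_abs_self _).trans (hK y)
    _ = K := by simp

/- The Cramér–Rao bound for the location family of `gibbs V σ`, whose score is `V' - σ`. -/
lemma one_le_mul_variance_gibbs (σ : ℝ) : 1 ≤ K * Var[id; gibbs V σ] := by
  have := isProbabilityMeasure_gibbs hV σ
  set m := ∫ y, y ∂gibbs V σ
  have hscore := memLp_deriv_sub_gibbs hV hV₂ hK σ
  have hcentred : MemLp (fun y : ℝ => y - m) 2 (gibbs V σ) :=
    (memLp_id_of_integrable_exp (integrable_exp_mul_gibbs hV σ) 2).sub (memLp_const m)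
  have hone : ∫ y, (deriv V y - σ) * (y - m) ∂gibbs V σ = 1 := by
    simpa using integral_deriv_sub_smul_gibbs hV (hV₂.differentiable two_ne_zero) σ
      (fun y => (hasDerivAt_id y).sub_const m) (hcentred.integrable one_le_two)
      (integrable_const 1) (hscore.integrable_mul hcentred)
  calc (1 : ℝ) = ‖∫ y, (deriv V y - σ) * (y - m) ∂gibbs V σ‖ ^ 2 := by rw [hone]; simp
    _ ≤ (∫ y, ‖deriv V y - σ‖ ^ 2 ∂gibbs V σ) * ∫ y, ‖y - m‖ ^ 2 ∂gibbs V σ :=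
        norm_integral_mul_sq_le hscore hcentred
    _ = (∫ y, (deriv V y - σ) ^ 2 ∂gibbs V σ) * Var[id; gibbs V σ] := by
        simp only [norm_eq_abs, sq_abs, variance_eq_integral aemeasurable_id, id_eq, m]
    _ ≤ K * Var[id; gibbs V σ] := by
        gcongr
        · exact variance_nonneg _ _
        · exact integral_deriv_sub_sq_gibbs_le hV hV₂ hK σ

lemma pos_of_abs_deriv_deriv_le : 0 < K :=
  pos_of_mul_pos_left (one_pos.trans_le (one_le_mul_variance_gibbs hV hV₂ hK 0))
    (variance_nonneg _ _)

lemma inv_le_variance_gibbs (σ : ℝ) : K⁻¹ ≤ Var[id; gibbs V σ] :=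
  (inv_le_iff_one_le_mul₀' (pos_of_abs_deriv_deriv_le hV hV₂ hK)).2
    (one_le_mul_variance_gibbs hV hV₂ hK σ)

lemma integral_deriv_sub_mul_cexp_sub_gibbs (σ t : ℝ) (z : ℂ) :
    ∫ y, ((deriv V y - σ : ℝ) : ℂ) * (Complex.exp (t * y * Complex.I) - z) ∂gibbs V σ =
      t * Complex.I * charFun (gibbs V σ) t := by
  have := isProbabilityMeasure_gibbs hV σ
  have hderiv (y : ℝ) : HasDerivAt (fun y : ℝ => Complex.exp (t * y * Complex.I) - z)
      (t * Complex.I * Complex.exp (t * y * Complex.I)) y := by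
    convert! ((((Complex.ofRealCLM.hasDerivAt (x := y)).const_mul (t : ℂ)).mul_const
      Complex.I).cexp.sub_const z) using 1
    simp only [Complex.ofRealCLM_apply, Complex.ofReal_one]
    ring
  have hexp := integrable_cexp_mul_I (gibbs V σ) t
  have hf : MemLp (fun y : ℝ => Complex.exp (t * y * Complex.I) - z) 2 (gibbs V σ) :=
    memLp_cexp_mul_I_sub (gibbs V σ) t z 2
  have hscore : MemLp (fun y => ((deriv V y - σ : ℝ) : ℂ)) 2 (gibbs V σ) :=
    (memLp_deriv_sub_gibbs hV hV₂ hK σ).ofReal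
  simp only [← Complex.real_smul (x := deriv V _ - σ)]
  rw [integral_deriv_sub_smul_gibbs hV (hV₂.differentiable two_ne_zero) σ hderiv
      (hf.integrable one_le_two) (hexp.const_mul _),
    integral_const_mul, charFun_apply_real]
  simp only [Complex.real_smul]
  exact hscore.integrable_mul hf

lemma norm_charFun_gibbs_sq_le (σ t : ℝ) :
    ‖charFun (gibbs V σ) t‖ ^ 2 ≤ (1 + K⁻¹ * t ^ 2)⁻¹ := by
  have := isProbabilityMeasure_gibbs hV σ
  have hKpos := pos_of_abs_deriv_deriv_le hV hV₂ hK
  set φ := charFun (gibbs V σ) t with hφ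
  have hcs : t ^ 2 * ‖φ‖ ^ 2 ≤ K * (1 - ‖φ‖ ^ 2) := by
    calc t ^ 2 * ‖φ‖ ^ 2 = ‖t * Complex.I * φ‖ ^ 2 := by simp [mul_pow]
      _ = ‖∫ y, ((deriv V y - σ : ℝ) : ℂ) * (Complex.exp (t * y * Complex.I) - φ)
            ∂gibbs V σ‖ ^ 2 := by rw [integral_deriv_sub_mul_cexp_sub_gibbs hV hV₂ hK]
      _ ≤ (∫ y, ‖((deriv V y - σ : ℝ) : ℂ)‖ ^ 2 ∂gibbs V σ) *
            ∫ y : ℝ, ‖Complex.exp (t * y * Complex.I) - φ‖ ^ 2 ∂gibbs V σ :=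
          norm_integral_mul_sq_le (memLp_deriv_sub_gibbs hV hV₂ hK σ).ofReal
            (memLp_cexp_mul_I_sub _ t φ 2)
      _ = (∫ y, (deriv V y - σ) ^ 2 ∂gibbs V σ) * (1 - ‖φ‖ ^ 2) := by
          simp only [hφ, integral_norm_exp_sub_charFun_sq, Complex.norm_real, norm_eq_abs, sq_abs]
      _ ≤ K * (1 - ‖φ‖ ^ 2) := by
          gcongr
          · exact sub_nonneg.2 (pow_le_one₀ (norm_nonneg _) (norm_charFun_le_one _))
          · exact integral_deriv_sub_sq_gibbs_le hV hV₂ hK σ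
  rw [← one_div, le_div_iff₀ (by positivity)]
  calc ‖φ‖ ^ 2 * (1 + K⁻¹ * t ^ 2) = ‖φ‖ ^ 2 + K⁻¹ * (t ^ 2 * ‖φ‖ ^ 2) := by ring
    _ ≤ ‖φ‖ ^ 2 + K⁻¹ * (K * (1 - ‖φ‖ ^ 2)) := by gcongr
    _ = 1 := by rw [inv_mul_cancel_left₀ hKpos.ne']; ring

end Score

/-! ### Replacing one factor in a power of a characteristic function -/

section CharFunBounds

variable {μ : Measure ℝ} (hμ : ∀ t, Integrable (fun y => exp (t * y)) μ)

lemma re_charFun [IsFiniteMeasure μ] (t : ℝ) : (charFun μ t).re = ∫ y, cos (t * y) ∂μ := by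
  have := Complex.reCLM.integral_comp_comm (integrable_cexp_mul_I μ t)
  simp only [Complex.reCLM_apply, ← Complex.ofReal_mul, Complex.exp_ofReal_mul_I_re] at this
  rw [charFun_apply_real, this]
  simp only [Complex.ofReal_mul]

lemma im_charFun [IsFiniteMeasure μ] (t : ℝ) : (charFun μ t).im = ∫ y, sin (t * y) ∂μ := by
  have := Complex.imCLM.integral_comp_comm (integrable_cexp_mul_I μ t)
  simp only [Complex.imCLM_apply, ← Complex.ofReal_mul, Complex.exp_ofReal_mul_I_im] at this
  rw [charFun_apply_real, this]
  simp only [Complex.ofReal_mul]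

lemma integrable_sin_mul [IsFiniteMeasure μ] (t : ℝ) : Integrable (fun y => sin (t * y)) μ :=
  .of_bound (by fun_prop) 1 (Eventually.of_forall fun y => abs_sin_le_one (t * y))

lemma integrable_cos_mul [IsFiniteMeasure μ] (t : ℝ) : Integrable (fun y => cos (t * y)) μ :=
  .of_bound (by fun_prop) 1 (Eventually.of_forall fun y => abs_cos_le_one (t * y))

include hμ

lemma integrable_abs_pow [IsFiniteMeasure μ] (k : ℕ) : Integrable (fun y => |y| ^ k) μ :=
  (memLp_id_of_integrable_exp hμ k).integrable_norm_pow'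

lemma abs_one_sub_re_charFun_le [IsProbabilityMeasure μ] (t : ℝ) :
    |1 - (charFun μ t).re| ≤ (∫ y, |y| ^ 2 ∂μ) / 2 * t ^ 2 := by
  calc |1 - (charFun μ t).re| = ‖∫ y, (1 - cos (t * y)) ∂μ‖ := by
        rw [integral_sub (integrable_const _) (integrable_cos_mul t), re_charFun]
        simp
    _ ≤ ∫ y, t ^ 2 / 2 * |y| ^ 2 ∂μ :=
        norm_integral_le_of_norm_le ((integrable_abs_pow hμ 2).const_mul _)
          (Eventually.of_forall fun y => by
            rw [norm_eq_abs, abs_of_nonneg (sub_nonneg.2 (cos_le_one _)), sq_abs]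
            linarith [one_sub_sq_div_two_le_cos (x := t * y)])
    _ = (∫ y, |y| ^ 2 ∂μ) / 2 * t ^ 2 := by
        rw [integral_const_mul]
        ring

lemma abs_im_charFun_le [IsFiniteMeasure μ] (t : ℝ) : |(charFun μ t).im| ≤ (∫ y, |y| ∂μ) * |t| := by
  have habs : Integrable (fun y => |y|) μ := by simpa using integrable_abs_pow hμ 1
  calc |(charFun μ t).im| = ‖∫ y, sin (t * y) ∂μ‖ := by rw [im_charFun, norm_eq_abs]
    _ ≤ ∫ y, |y| * |t| ∂μ :=
        norm_integral_le_of_norm_le (habs.mul_const _) (Eventually.of_forall fun y =>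
          abs_sin_le_abs.trans_eq (by rw [abs_mul, mul_comm]))
    _ = (∫ y, |y| ∂μ) * |t| := integral_mul_const _ _

lemma abs_im_charFun_le_of_integral_eq_zero [IsFiniteMeasure μ] (hmean : ∫ y, y ∂μ = 0)
    (t : ℝ) :
    |(charFun μ t).im| ≤ (∫ y, |y| ^ 3 ∂μ) / 6 * |t| ^ 3 := by
  have hid : Integrable (fun y => t * y) μ :=
    ((memLp_id_of_integrable_exp hμ 1).integrable le_rfl).const_mul t
  calc |(charFun μ t).im| = ‖∫ y, (t * y - sin (t * y)) ∂μ‖ := by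
        rw [integral_sub hid (integrable_sin_mul t), integral_const_mul, hmean, im_charFun]
        simp
    _ ≤ ∫ y, |t| ^ 3 / 6 * |y| ^ 3 ∂μ :=
        norm_integral_le_of_norm_le ((integrable_abs_pow hμ 3).const_mul _)
          (Eventually.of_forall fun y => (abs_sub_sin_le _).trans_eq (by
            rw [abs_mul, mul_pow]
            ring))
    _ = (∫ y, |y| ^ 3 ∂μ) / 6 * |t| ^ 3 := by
        rw [integral_const_mul]
        ring

end CharFunBounds

lemma abs_im_pow_succ_le (z : ℂ) (n : ℕ) : |(z ^ (n + 1)).im| ≤ (n + 1) * |z.im| * ‖z‖ ^ n := by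
  induction n with
  | zero => simp
  | succ n ih =>
    rw [pow_succ z, Complex.mul_im]
    calc |(z ^ (n + 1)).re * z.im + (z ^ (n + 1)).im * z.re|
        ≤ |(z ^ (n + 1)).re| * |z.im| + |(z ^ (n + 1)).im| * |z.re| := by
          rw [← abs_mul, ← abs_mul]
          exact abs_add_le _ _
      _ ≤ ‖z‖ ^ (n + 1) * |z.im| + (n + 1) * |z.im| * ‖z‖ ^ n * ‖z‖ := by
          gcongr
          · exact (Complex.abs_re_le_norm _).trans_eq (norm_pow _ _)
          · exact Complex.abs_re_le_norm z
      _ = ((n + 1 : ℕ) + 1) * |z.im| * ‖z‖ ^ (n + 1) := by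
          push_cast
          ring

lemma abs_re_mul_pow_succ_le (w z : ℂ) (n : ℕ) :
    |(w * z ^ (n + 1)).re| ≤ |w.re| * ‖z‖ ^ (n + 1) + (n + 1) * (|w.im| * |z.im|) * ‖z‖ ^ n := by
  calc |(w * z ^ (n + 1)).re| = |w.re * (z ^ (n + 1)).re - w.im * (z ^ (n + 1)).im| := by
        rw [Complex.mul_re]
    _ ≤ |w.re| * |(z ^ (n + 1)).re| + |w.im| * |(z ^ (n + 1)).im| := by
        rw [← abs_mul, ← abs_mul]
        exact abs_sub _ _
    _ ≤ |w.re| * ‖z‖ ^ (n + 1) + |w.im| * ((n + 1) * |z.im| * ‖z‖ ^ n) := by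
        gcongr
        · exact (Complex.abs_re_le_norm _).trans_eq (norm_pow _ _)
        · exact abs_im_pow_succ_le z n
    _ = _ := by ring

lemma integrable_inv_one_add_mul_sq {c : ℝ} (hc : 0 < c) :
    Integrable fun t : ℝ => (1 + c * t ^ 2)⁻¹ := by
  have := integrable_inv_one_add_sq.comp_mul_left' (R := √c) (by positivity)
  simpa only [mul_pow, sq_sqrt hc.le] using this

lemma integral_inv_one_add_mul_sq {c : ℝ} (hc : 0 < c) :
    ∫ t : ℝ, (1 + c * t ^ 2)⁻¹ = π / √c := by
  have := Measure.integral_comp_mul_left (fun t : ℝ => (1 + t ^ 2)⁻¹) √c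
  simp only [mul_pow, sq_sqrt hc.le, integral_univ_inv_one_add_sq] at this
  rw [this, abs_of_nonneg (by positivity), smul_eq_mul, inv_mul_eq_div]

/- Bernoulli's inequality turns the `m`-th power of the quadratic decay into quadratic decay at
scale `p⁻¹`, with two spare factors absorbing `(t ^ 2) ^ k`. -/
lemma sq_pow_mul_pow_le {c x t p : ℝ} {k m : ℕ} (hc : 0 < c) (hx : 0 ≤ x)
    (hxt : x ^ 2 ≤ (1 + c * t ^ 2)⁻¹) (hp : 1 ≤ p) (hpm : 6 * p ≤ m) (hk : k ≤ 2) :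
    (t ^ 2) ^ k * x ^ m ≤ ((c * p)⁻¹) ^ k * (1 + c * p * t ^ 2)⁻¹ := by
  set u := 1 + c * p * t ^ 2
  have hu₁ : 1 ≤ u := le_add_of_nonneg_right (by positivity)
  have hx₁ : x ≤ 1 := (sq_le_one_iff₀ hx).1 (hxt.trans (inv_le_one_of_one_le₀
    (le_add_of_nonneg_right (by positivity))))
  have hpow : x ^ m ≤ (u ^ 3)⁻¹ := by
    calc x ^ m = x ^ (m : ℝ) := (rpow_natCast x m).symm
      _ ≤ x ^ (6 * p) := rpow_le_rpow_of_exponent_ge' hx hx₁ (by positivity) hpm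
      _ = ((x ^ 2) ^ p) ^ 3 := by
          rw [← rpow_natCast, ← rpow_natCast, ← rpow_mul hx, ← rpow_mul hx]
          norm_num
          ring_nf
      _ ≤ (((1 + c * t ^ 2)⁻¹) ^ p) ^ 3 := by gcongr
      _ = (((1 + c * t ^ 2) ^ p) ^ 3)⁻¹ := by rw [inv_rpow (by positivity), inv_pow]
      _ ≤ (u ^ 3)⁻¹ := by
          gcongr
          have := one_add_mul_self_le_rpow_one_add (s := c * t ^ 2) (by nlinarith [sq_nonneg t]) hp
          linarith
  have hsq : (t ^ 2) ^ k ≤ ((c * p)⁻¹) ^ k * u ^ 2 := by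
    calc (t ^ 2) ^ k = ((c * p)⁻¹) ^ k * (c * p * t ^ 2) ^ k := by
          rw [← mul_pow, inv_mul_cancel_left₀ (by positivity)]
      _ ≤ ((c * p)⁻¹) ^ k * u ^ k := by
          gcongr
          exact le_add_of_nonneg_left zero_le_one
      _ ≤ ((c * p)⁻¹) ^ k * u ^ 2 := by gcongr
  calc (t ^ 2) ^ k * x ^ m ≤ ((c * p)⁻¹) ^ k * u ^ 2 * (u ^ 3)⁻¹ := by gcongr
    _ = ((c * p)⁻¹) ^ k * u⁻¹ := by
        field_simp

lemma abs_integral_re_mul_pow_succ_le {a w : ℝ → ℂ} {c C₁ C₂ p : ℝ} {n : ℕ} (hc : 0 < c)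
    (ha : ∀ t, ‖a t‖ ^ 2 ≤ (1 + c * t ^ 2)⁻¹) (hre : ∀ t, |(w t).re| ≤ C₁ * t ^ 2)
    (him : ∀ t, |(w t).im| * |(a t).im| ≤ C₂ * (t ^ 2) ^ 2) (hp : 1 ≤ p) (hpn : 6 * p ≤ n) :
    |∫ t, (w t * a t ^ (n + 1)).re| ≤
      (C₁ * (c * p)⁻¹ + (n + 1) * C₂ * ((c * p)⁻¹) ^ 2) * (π / √(c * p)) := by
  have hC₁ : 0 ≤ C₁ := by simpa using (abs_nonneg _).trans (hre 1)
  have hC₂ : 0 ≤ C₂ := by simpa using (mul_nonneg (abs_nonneg _) (abs_nonneg _)).trans (him 1)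
  have hcp : 0 < c * p := by positivity
  rw [← integral_inv_one_add_mul_sq hcp, ← integral_const_mul, ← norm_eq_abs]
  refine norm_integral_le_of_norm_le ((integrable_inv_one_add_mul_sq hcp).const_mul _)
    (Eventually.of_forall fun t => ?_)
  have hpow₁ : t ^ 2 * ‖a t‖ ^ (n + 1) ≤ (c * p)⁻¹ * (1 + c * p * t ^ 2)⁻¹ := by
    simpa using sq_pow_mul_pow_le (k := 1) (m := n + 1) hc (norm_nonneg _) (ha t) hp
      (by push_cast; linarith) one_le_two
  have hpow₂ := sq_pow_mul_pow_le hc (norm_nonneg _) (ha t) hp hpn le_rfl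
  calc ‖(w t * a t ^ (n + 1)).re‖
      ≤ |(w t).re| * ‖a t‖ ^ (n + 1) + (n + 1) * (|(w t).im| * |(a t).im|) * ‖a t‖ ^ n :=
        abs_re_mul_pow_succ_le _ _ _
    _ ≤ C₁ * t ^ 2 * ‖a t‖ ^ (n + 1) + (n + 1) * (C₂ * (t ^ 2) ^ 2) * ‖a t‖ ^ n := by
        gcongr (?_ * _ + (_ + 1) * ?_ * _)
        · exact hre t
        · exact him t
    _ = C₁ * (t ^ 2 * ‖a t‖ ^ (n + 1)) + (n + 1) * C₂ * ((t ^ 2) ^ 2 * ‖a t‖ ^ n) := by ring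
    _ ≤ C₁ * ((c * p)⁻¹ * (1 + c * p * t ^ 2)⁻¹) +
          (n + 1) * C₂ * (((c * p)⁻¹) ^ 2 * (1 + c * p * t ^ 2)⁻¹) := by gcongr
    _ = _ := by ring

lemma isBigO_integral_re_mul_pow {a w : ℝ → ℂ} {c C₁ C₂ : ℝ} (hc : 0 < c)
    (ha : ∀ t, ‖a t‖ ^ 2 ≤ (1 + c * t ^ 2)⁻¹) (hre : ∀ t, |(w t).re| ≤ C₁ * t ^ 2)
    (him : ∀ t, |(w t).im| * |(a t).im| ≤ C₂ * (t ^ 2) ^ 2) :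
    (fun N : ℕ => ∫ t, (w t * a t ^ (N - 1)).re) =O[atTop] fun N : ℕ => (N * √N : ℝ)⁻¹ := by
  have hC₂ : 0 ≤ C₂ := by simpa using (mul_nonneg (abs_nonneg _) (abs_nonneg _)).trans (him 1)
  refine .of_bound ((C₁ * c⁻¹ + 12 * C₂ * (c⁻¹) ^ 2) * (π / √c) * (12 * √12)) ?_
  filter_upwards [eventually_ge_atTop 12] with N hN
  obtain ⟨n, rfl⟩ : ∃ n, N = n + 2 := ⟨N - 2, by omega⟩
  have hN' : (12 : ℝ) ≤ (n + 2 : ℕ) := by exact_mod_cast hN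
  set N : ℝ := ((n + 2 : ℕ) : ℝ) with hNdef
  have hn : (n : ℝ) = N - 2 := by rw [hNdef]; push_cast; ring
  have hbound := abs_integral_re_mul_pow_succ_le (p := N / 12) (n := n) hc ha hre him
    (by linarith) (by linarith)
  rw [norm_eq_abs, norm_of_nonneg (by positivity)]
  have hsqrt : √(c * (N / 12)) = √c * √N / √12 := by
    rw [sqrt_mul hc.le, sqrt_div (by positivity), mul_div_assoc]
  calc |∫ t, (w t * a t ^ (n + 1)).re|
      ≤ (C₁ * (c * (N / 12))⁻¹ + N * C₂ * ((c * (N / 12))⁻¹) ^ 2) * (π / √(c * (N / 12))) := by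
        refine hbound.trans ?_
        gcongr
        linarith
    _ = _ := by
        rw [hsqrt]
        field_simp

lemma integrable_charFun_pow {μ : Measure ℝ} [IsFiniteMeasure μ] {c : ℝ} (hc : 0 < c)
    (hdecay : ∀ t, ‖charFun μ t‖ ^ 2 ≤ (1 + c * t ^ 2)⁻¹) {n : ℕ} (hn : 6 ≤ n) :
    Integrable fun t => charFun μ t ^ n :=
  (integrable_inv_one_add_mul_sq hc).mono' (by fun_prop) (Eventually.of_forall fun t => by
    simpa using sq_pow_mul_pow_le (k := 0) (m := n) (p := 1) hc (norm_nonneg _) (hdecay t) le_rfl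
      (by simpa using hn) zero_le_two)

lemma integrable_charFun_mul_charFun_pow {μ ν : Measure ℝ} [IsFiniteMeasure μ]
    [IsFiniteMeasure ν] {c : ℝ} (hc : 0 < c)
    (hdecay : ∀ t, ‖charFun μ t‖ ^ 2 ≤ (1 + c * t ^ 2)⁻¹) {n : ℕ} (hn : 6 ≤ n) :
    Integrable fun t => charFun ν t * charFun μ t ^ n :=
  (integrable_charFun_pow hc hdecay hn).bdd_mul (by fun_prop) (Eventually.of_forall norm_charFun_le)

section LocalLimit

variable {μ : Measure ℝ} [IsProbabilityMeasure μ]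

lemma tendsto_charFun_pow (hmean : ∫ y, y ∂μ = 0) (hvar : 0 < ∫ y, y ^ 2 ∂μ) (t : ℝ) :
    Tendsto (fun N : ℕ => charFun μ ((√N)⁻¹ * t) ^ N) atTop
      (𝓝 (exp (-((∫ y, y ^ 2 ∂μ) / 2) * t ^ 2) : ℂ)) := by
  set v := ∫ y, y ^ 2 ∂μ
  have hclt := tendsto_charFun_inv_sqrt_mul_pow (P := μ) (X := fun y => (√v)⁻¹ * y) (by fun_prop)
    (by rw [integral_const_mul, hmean, mul_zero])
    (by
      simp only [Pi.pow_apply, mul_pow, inv_pow, sq_sqrt hvar.le]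
      rw [integral_const_mul, inv_mul_cancel₀ hvar.ne']) (√v * t)
  simp only [charFun_map_mul] at hclt
  convert! hclt using 2
  · congr 2
    have : √v ≠ 0 := by positivity
    field_simp
  · rw [Complex.ofReal_exp]
    congr 1
    norm_cast
    rw [neg_mul, neg_div, mul_pow, sq_sqrt hvar.le]
    ring

lemma tendsto_sqrt_mul_integral_re_charFun_pow {c : ℝ} (hc : 0 < c)
    (hdecay : ∀ t, ‖charFun μ t‖ ^ 2 ≤ (1 + c * t ^ 2)⁻¹) (hmean : ∫ y, y ∂μ = 0)
    (hvar : 0 < ∫ y, y ^ 2 ∂μ) :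
    Tendsto (fun N : ℕ => √N * ∫ t, (charFun μ t ^ N).re) atTop
      (𝓝 √(π / ((∫ y, y ^ 2 ∂μ) / 2))) := by
  have hdom : ∀ᶠ N : ℕ in atTop, ∀ᵐ t, ‖(charFun μ ((√N)⁻¹ * t) ^ N).re‖ ≤
      (1 + c / 6 * t ^ 2)⁻¹ := by
    filter_upwards [eventually_ge_atTop 6] with N hN
    have hN' : (6 : ℝ) ≤ N := by exact_mod_cast hN
    refine Eventually.of_forall fun t => (Complex.abs_re_le_norm _).trans ?_
    have := sq_pow_mul_pow_le (k := 0) (m := N) (p := N / 6) hc (norm_nonneg _)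
      (hdecay ((√N)⁻¹ * t)) (by linarith) (by linarith) zero_le_two
    rw [pow_zero, pow_zero, one_mul, one_mul, mul_pow, inv_pow, sq_sqrt (by positivity)] at this
    rw [norm_pow]
    refine this.trans_eq ?_
    field_simp
  have hlim := tendsto_integral_filter_of_dominated_convergence _
    (Eventually.of_forall fun N : ℕ => by fun_prop) hdom
    (integrable_inv_one_add_mul_sq (by positivity : 0 < c / 6))
    (Eventually.of_forall fun t =>
      (Complex.continuous_re.tendsto _).comp (tendsto_charFun_pow hmean hvar t))
  simp only [Complex.ofReal_re, integral_gaussian] at hlim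
  refine hlim.congr fun N => ?_
  rw [Measure.integral_comp_mul_left (fun t => (charFun μ t ^ N).re), inv_inv,
    abs_of_nonneg (sqrt_nonneg _), smul_eq_mul]

lemma eventually_integral_re_charFun_pow_pos {c : ℝ} (hc : 0 < c)
    (hdecay : ∀ t, ‖charFun μ t‖ ^ 2 ≤ (1 + c * t ^ 2)⁻¹) (hmean : ∫ y, y ∂μ = 0)
    (hvar : 0 < ∫ y, y ^ 2 ∂μ) :
    ∀ᶠ N : ℕ in atTop, 0 < ∫ t, (charFun μ t ^ N).re := by
  have hlim := tendsto_sqrt_mul_integral_re_charFun_pow hc hdecay hmean hvar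
  filter_upwards [hlim.eventually_const_lt (by positivity)] with N hN
  exact pos_of_mul_pos_right hN (sqrt_nonneg _)

end LocalLimit

section Replacement

variable {μ ν : Measure ℝ} [IsProbabilityMeasure μ] [IsProbabilityMeasure ν]
  (hμ : ∀ t, Integrable (fun y => exp (t * y)) μ) (hν : ∀ t, Integrable (fun y => exp (t * y)) ν)
  {c : ℝ} (hc : 0 < c) (hdecay : ∀ t, ‖charFun μ t‖ ^ 2 ≤ (1 + c * t ^ 2)⁻¹)
  (hmean : ∫ y, y ∂μ = 0) (hvar : 0 < ∫ y, y ^ 2 ∂μ)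

include hμ hν hc hdecay hmean

/- The real part of `charFun ν - charFun μ` is `O(t ^ 2)`; its imaginary part is only `O(t)`, but
meets the imaginary part of `charFun μ ^ (N - 1)`, which is `O(N t ^ 3)` since `μ` is centred. -/
lemma isBigO_integral_re_charFun_mul_pow_sub :
    (fun N : ℕ => (∫ t, (charFun ν t * charFun μ t ^ (N - 1)).re) - ∫ t, (charFun μ t ^ N).re)
      =O[atTop] fun N : ℕ => (N * √N : ℝ)⁻¹ := by
  have hre (t : ℝ) : |(charFun ν t - charFun μ t).re| ≤
      ((∫ y, |y| ^ 2 ∂ν) / 2 + (∫ y, |y| ^ 2 ∂μ) / 2) * t ^ 2 := by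
    have := abs_sub (1 - (charFun μ t).re) (1 - (charFun ν t).re)
    rw [Complex.sub_re, ← sub_sub_sub_cancel_left _ _ 1]
    linarith [abs_one_sub_re_charFun_le hμ t, abs_one_sub_re_charFun_le hν t]
  have him (t : ℝ) : |(charFun ν t - charFun μ t).im| * |(charFun μ t).im| ≤
      (∫ y, |y| ∂ν + ∫ y, |y| ∂μ) * ((∫ y, |y| ^ 3 ∂μ) / 6) * (t ^ 2) ^ 2 := by
    calc |(charFun ν t - charFun μ t).im| * |(charFun μ t).im|
        ≤ ((∫ y, |y| ∂ν) * |t| + (∫ y, |y| ∂μ) * |t|) * ((∫ y, |y| ^ 3 ∂μ) / 6 * |t| ^ 3) := by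
          rw [Complex.sub_im]
          gcongr
          · exact (abs_sub _ _).trans
              (add_le_add (abs_im_charFun_le hν t) (abs_im_charFun_le hμ t))
          · exact abs_im_charFun_le_of_integral_eq_zero hμ hmean t
      _ = _ := by
          rw [← sq_abs t]
          ring
  refine (isBigO_integral_re_mul_pow hc hdecay hre him).congr' ?_ .rfl
  filter_upwards [eventually_ge_atTop 7] with N hN
  have hint := integrable_charFun_pow hc hdecay (by omega : 6 ≤ N)
  have hint' := integrable_charFun_mul_charFun_pow (ν := ν) hc hdecay (by omega : 6 ≤ N - 1)
  have hsub := integral_sub (Complex.reCLM.integrable_comp hint')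
    (Complex.reCLM.integrable_comp hint)
  simp only [Complex.reCLM_apply] at hsub
  rw [← hsub]
  simp only [sub_mul, mul_pow_sub_one (by omega : N ≠ 0), Complex.sub_re]

include hvar

lemma isBigO_integral_re_charFun_mul_pow_div_sub_one :
    (fun N : ℕ => (∫ t, (charFun ν t * charFun μ t ^ (N - 1)).re) / (∫ t, (charFun μ t ^ N).re) - 1)
      =O[atTop] fun N : ℕ => (N : ℝ)⁻¹ := by
  have hinv : (fun N : ℕ => (√N * ∫ t, (charFun μ t ^ N).re)⁻¹) =O[atTop] fun _ => (1 : ℝ) :=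
    ((tendsto_sqrt_mul_integral_re_charFun_pow hc hdecay hmean hvar).inv₀
      (by positivity)).isBigO_one ℝ
  refine (((isBigO_integral_re_charFun_mul_pow_sub hμ hν hc hdecay hmean).mul hinv).mul
    (isBigO_refl (fun N : ℕ => √(N : ℝ)) atTop)).congr' ?_ ?_
  · filter_upwards [eventually_gt_atTop 0,
      eventually_integral_re_charFun_pow_pos hc hdecay hmean hvar] with N hN hpos
    have : 0 < √(N : ℝ) := sqrt_pos.2 (by exact_mod_cast hN)
    field_simp
  · filter_upwards [eventually_gt_atTop 0] with N hN
    have : 0 < √(N : ℝ) := sqrt_pos.2 (by exact_mod_cast hN)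
    field_simp

lemma eventually_integral_re_charFun_mul_pow_pos :
    ∀ᶠ N : ℕ in atTop, 0 < ∫ t, (charFun ν t * charFun μ t ^ (N - 1)).re := by
  have hlim := tendsto_sub_nhds_zero_iff.1 ((isBigO_integral_re_charFun_mul_pow_div_sub_one hμ hν hc
    hdecay hmean hvar).trans_tendsto tendsto_inv_atTop_nhds_zero_nat)
  filter_upwards [hlim.eventually_const_lt one_pos,
    eventually_integral_re_charFun_pow_pos hc hdecay hmean hvar] with N hN hpos
  exact (div_pos_iff_of_pos_right hpos).1 hN

lemma isBigO_log_integral_re_charFun_mul_pow_div :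
    (fun N : ℕ =>
      log ((∫ t, (charFun ν t * charFun μ t ^ (N - 1)).re) / ∫ t, (charFun μ t ^ N).re))
      =O[atTop] fun N : ℕ => (N : ℝ)⁻¹ := by
  have hratio := isBigO_integral_re_charFun_mul_pow_div_sub_one hμ hν hc hdecay hmean hvar
  have hlim := tendsto_sub_nhds_zero_iff.1
    (hratio.trans_tendsto tendsto_inv_atTop_nhds_zero_nat)
  have hlog := (hasDerivAt_log one_ne_zero).isBigO_sub.comp_tendsto hlim
  simp only [Function.comp_def, log_one, sub_zero] at hlog
  exact hlog.trans hratio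

end Replacement

/-! ### Densities of normalized sums by Laplace inversion -/

open FourierTransform in
/- Bromwich inversion: the Laplace transform on the line `re z = θ` is the Fourier transform of
the density multiplied by `exp (θ * ·)`. -/
lemma ofReal_max_zero_eq_integral_exp_mul_complexMGF {G : ℝ → ℝ} {θ : ℝ} {μ : Measure ℝ}
    (hG : Continuous G) (hμ : μ = volume.withDensity fun y => ENNReal.ofReal (G y))
    (hexp : Integrable (fun y => exp (θ * y)) μ)
    (hint : Integrable fun t : ℝ => complexMGF id μ (θ + t * Complex.I)) (x : ℝ) :
    ((max (G x) 0 : ℝ) : ℂ) = ((2 * π)⁻¹ : ℝ) *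
      ∫ t : ℝ, Complex.exp (-((θ + t * Complex.I) * x)) * complexMGF id μ (θ + t * Complex.I) := by
  let F : ℝ → ℂ := fun y => ((max (G y) 0 * exp (θ * y) : ℝ) : ℂ)
  have hF : Integrable F := by
    rw [hμ, integrable_withDensity_iff_integrable_smul' (by fun_prop) (by simp)] at hexp
    simp only [ENNReal.toReal_ofReal', smul_eq_mul] at hexp
    exact hexp.ofReal
  have hfourier : 𝓕 F = fun w => complexMGF id μ (θ + (-(2 * π) * w : ℝ) * Complex.I) := by
    ext w
    rw [complexMGF, hμ, integral_withDensity_eq_integral_toReal_smul (by fun_prop) (by simp),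
      Real.fourier_real_eq_integral_exp_smul]
    congr with y
    simp only [F, ENNReal.toReal_ofReal', smul_eq_mul, Complex.real_smul, Complex.ofReal_mul,
      Complex.ofReal_exp, id_eq]
    rw [mul_left_comm, ← Complex.exp_add]
    congr 2
    push_cast
    ring
  have hpi : -(2 * π) ≠ 0 := by simp [pi_ne_zero]
  have hinv := hF.fourierInv_fourier_eq (hfourier ▸ hint.comp_mul_left' hpi) (v := x)
    (by fun_prop : Continuous F).continuousAt
  rw [Real.fourierInv_eq', hfourier] at hinv
  let H : ℝ → ℂ := fun t =>
    Complex.exp (-(t * x * Complex.I)) * complexMGF id μ (θ + t * Complex.I)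
  have hscale : F x = ((2 * π)⁻¹ : ℝ) * ∫ t, H t := by
    have := Measure.integral_comp_mul_left H (-(2 * π))
    rw [abs_inv, abs_neg, abs_of_pos two_pi_pos, Complex.real_smul] at this
    rw [← hinv, ← this]
    congr with w
    simp only [H, smul_eq_mul, RCLike.inner_apply, conj_trivial]
    push_cast
    ring_nf
  calc ((max (G x) 0 : ℝ) : ℂ)
      = Complex.exp (-(θ * x)) * F x := by
        simp only [F, Complex.ofReal_mul, Complex.ofReal_exp]
        rw [mul_left_comm, ← Complex.exp_add, neg_add_cancel, Complex.exp_zero, mul_one]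
    _ = ((2 * π)⁻¹ : ℝ) * ∫ t : ℝ, Complex.exp (-(θ * x)) * H t := by
        rw [hscale, mul_left_comm, integral_const_mul]
    _ = _ := by
        simp only [H, ← mul_assoc, ← Complex.exp_add]
        congr with t
        ring_nf

section Law

variable {Ω : Type*} [MeasurableSpace Ω] {P : Measure Ω}

lemma complexMGF_const_mul (X : Ω → ℝ) (r : ℝ) (z : ℂ) :
    complexMGF (fun ω => r * X ω) P z = complexMGF X P (z * r) := by
  simp only [complexMGF, Complex.ofReal_mul, mul_assoc]

variable {ι : Type*} [Fintype ι] {E : ι → Type*} [∀ i, MeasurableSpace (E i)]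
  {ρ : ∀ i, Measure (E i)} [∀ i, SigmaFinite (ρ i)]

lemma complexMGF_sum_pi (X : ∀ i, E i → ℝ) (z : ℂ) :
    complexMGF (fun x => ∑ i, X i (x i)) (Measure.pi ρ) z = ∏ i, complexMGF (X i) (ρ i) z := by
  simp only [complexMGF, Complex.ofReal_sum, Finset.mul_sum, Complex.exp_sum]
  exact integral_fintype_prod_eq_prod fun i y => Complex.exp (z * X i y)

lemma integrable_exp_mul_sum_pi {X : ∀ i, E i → ℝ} {θ : ℝ}
    (hX : ∀ i, Integrable (fun y => exp (θ * X i y)) (ρ i)) :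
    Integrable (fun x => exp (θ * ∑ i, X i (x i))) (Measure.pi ρ) := by
  simp only [Finset.mul_sum, exp_sum]
  exact Integrable.fintype_prod_dep hX

end Law

lemma complexMGF_sub_const_tilted {μ : Measure ℝ} (δ A : ℝ) (z : ℂ) :
    complexMGF (· - A) (μ.tilted (δ * ·)) (z - δ) =
      (exp (δ * A) / mgf id μ δ : ℝ) * complexMGF (· - A) μ z := by
  rw [complexMGF, complexMGF, integral_tilted, ← integral_const_mul]
  congr with y
  simp only [mgf, id_eq, Complex.real_smul, Complex.ofReal_div, Complex.ofReal_exp]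
  rw [div_mul_eq_mul_div, div_mul_eq_mul_div, ← Complex.exp_add, ← Complex.exp_add]
  congr 2
  push_cast
  ring

lemma integrable_exp_mul_sub {μ : Measure ℝ} {t : ℝ} (A : ℝ)
    (ht : Integrable (fun y => exp (t * y)) μ) : Integrable (fun y => exp (t * (y - A))) μ := by
  refine (ht.const_mul (exp (-(t * A)))).congr (Eventually.of_forall fun y => ?_)
  simp only [← exp_add]
  ring_nf

lemma integrable_exp_mul_tilted {μ : Measure ℝ} (hμ : ∀ t, Integrable (fun y => exp (t * y)) μ)
    (δ t : ℝ) : Integrable (fun y => exp (t * y)) (μ.tilted (δ * ·)) := by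
  rw [integrable_tilted_iff (hμ δ)]
  simpa only [smul_eq_mul, ← exp_add, ← add_mul] using hμ (δ + t)

section Tilted

variable {ι : Type*} [Fintype ι] {μ : ι → Measure ℝ} [∀ i, NeZero (μ i)]
  (hμ : ∀ i t, Integrable (fun y => exp (t * y)) (μ i)) {δ A r : ℝ} (hr : 0 < r)

include hμ hr

/- Tilting by `δ` moves the line of integration; shifting it back by `-δ / r` recovers the
characteristic functions of the untilted measures. -/
lemma complexMGF_mul_sum_sub_pi_tilted (t : ℝ) :
    complexMGF (fun x : ι → ℝ => r * ∑ i, (x i - A)) (Measure.pi fun i => (μ i).tilted (δ * ·))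
      ((-δ / r : ℝ) + t * Complex.I) =
      exp (∑ i, (δ * A - cgf id (μ i) δ)) * ∏ i, charFun ((μ i).map (· - A)) (r * t) := by
  have (i : ι) : IsProbabilityMeasure ((μ i).tilted (δ * ·)) := isProbabilityMeasure_tilted (hμ i δ)
  have harg : ((-δ / r : ℝ) + t * Complex.I) * r = (r * t : ℝ) * Complex.I - δ := by
    push_cast
    rw [add_mul, div_mul_cancel₀ _ (by exact_mod_cast hr.ne')]
    ring
  rw [complexMGF_const_mul, complexMGF_sum_pi (fun _ y => y - A), harg]
  simp only [complexMGF_sub_const_tilted, Finset.prod_mul_distrib]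
  congr 1
  · simp only [exp_sum, Complex.ofReal_prod, exp_sub, fun i => exp_cgf (X := id) (hμ i δ)]
  · exact Finset.prod_congr rfl fun i _ => complexMGF_mul_I (by fun_prop) _

lemma max_zero_eq_integral_re_prod_charFun {G : ℝ → ℝ} (hG : Continuous G)
    (hlaw : (Measure.pi fun i => (μ i).tilted (δ * ·)).map (fun x => r * ∑ i, (x i - A)) =
      volume.withDensity fun y => ENNReal.ofReal (G y))
    (hint : Integrable fun t => ∏ i, charFun ((μ i).map (· - A)) t) :
    max (G 0) 0 = exp (∑ i, (δ * A - cgf id (μ i) δ)) * (2 * π * r)⁻¹ *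
      ∫ t, (∏ i, charFun ((μ i).map (· - A)) t).re := by
  have (i : ι) : IsProbabilityMeasure ((μ i).tilted (δ * ·)) := isProbabilityMeasure_tilted (hμ i δ)
  let T : (ι → ℝ) → ℝ := fun x => r * ∑ i, (x i - A)
  have hT : Measurable T := by fun_prop
  have hexp : Integrable (fun y => exp (-δ / r * y))
      ((Measure.pi fun i => (μ i).tilted (δ * ·)).map T) := by
    rw [integrable_map_measure (by fun_prop) hT.aemeasurable]
    convert! integrable_exp_mul_sum_pi (X := fun _ y => y - A) (θ := -δ) fun i =>
      integrable_exp_mul_sub A (integrable_exp_mul_tilted (hμ i) δ (-δ)) using 2 with x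
    simp only [Function.comp_apply, T]
    field_simp
  have hMGF : (fun t : ℝ => complexMGF id ((Measure.pi fun i => (μ i).tilted (δ * ·)).map T)
      ((-δ / r : ℝ) + t * Complex.I)) = fun t : ℝ =>
      exp (∑ i, (δ * A - cgf id (μ i) δ)) * ∏ i, charFun ((μ i).map (· - A)) (r * t) := by
    ext t
    rw [complexMGF_id_map hT.aemeasurable, complexMGF_mul_sum_sub_pi_tilted hμ hr]
  have hinv := ofReal_max_zero_eq_integral_exp_mul_complexMGF hG hlaw hexp
    (hMGF ▸ (hint.comp_mul_left' hr.ne').const_mul _) 0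
  simp only [Complex.ofReal_zero, mul_zero, neg_zero, Complex.exp_zero, one_mul] at hinv
  rw [hMGF, integral_const_mul,
    Measure.integral_comp_mul_left fun t => ∏ i, charFun ((μ i).map (· - A)) t] at hinv
  have hre := Complex.reCLM.integral_comp_comm hint
  simp only [Complex.reCLM_apply] at hre
  rw [hre, ← Complex.ofReal_re (max _ _), hinv, abs_of_pos (inv_pos.2 hr), Complex.real_smul,
    Complex.re_ofReal_mul, Complex.re_ofReal_mul, Complex.re_ofReal_mul]
  ring

end Tilted

@[to_additive]
lemma prod_apply_ite_val_eq_zero {α M : Type*} [CommMonoid M] {N : ℕ} (hN : N ≠ 0) (F : α → M)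
    (a b : α) : ∏ i : Fin N, F (if (i : ℕ) = 0 then a else b) = F a * F b ^ (N - 1) := by
  obtain ⟨n, rfl⟩ := Nat.exists_eq_succ_of_ne_zero hN
  simp [Fin.prod_univ_succ]

section OneReplaced

variable {μ ν : Measure ℝ} [IsProbabilityMeasure μ] [IsProbabilityMeasure ν]
  (hμ : ∀ t, Integrable (fun y => exp (t * y)) μ) (hν : ∀ t, Integrable (fun y => exp (t * y)) ν)
  {c A : ℝ} (hc : 0 < c) (hdecay : ∀ t, ‖charFun (μ.map (· - A)) t‖ ^ 2 ≤ (1 + c * t ^ 2)⁻¹)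

include hμ hν hc hdecay

lemma density_zero_eq_integral_re_charFun_mul_pow {N : ℕ} (hN : 7 ≤ N) {G : ℝ → ℝ} {m₁ m₂ δ : ℝ}
    (hG : Continuous G) (hm : m₁ + (N - 1) * m₂ = N * A)
    (hlaw : (Measure.pi fun i : Fin N =>
        if (i : ℕ) = 0 then ν.tilted (δ * ·) else μ.tilted (δ * ·)).map
          (fun x : Fin N → ℝ => (√N)⁻¹ * ∑ i, (x i - if (i : ℕ) = 0 then m₁ else m₂)) =
      volume.withDensity fun y => ENNReal.ofReal (G y))
    (hpos : 0 < ∫ t, (charFun (ν.map (· - A)) t * charFun (μ.map (· - A)) t ^ (N - 1)).re) :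
    G 0 = exp (δ * (N * A) - (cgf id ν δ + (N - 1) * cgf id μ δ)) * (√N / (2 * π)) *
      ∫ t, (charFun (ν.map (· - A)) t * charFun (μ.map (· - A)) t ^ (N - 1)).re := by
  have hN₀ : N ≠ 0 := by omega
  have hcast : ((N - 1 : ℕ) : ℝ) = N - 1 := Nat.cast_pred (by omega)
  let ρ : Fin N → Measure ℝ := fun i => if (i : ℕ) = 0 then ν else μ
  have hρ (i : Fin N) : IsProbabilityMeasure (ρ i) := by
    unfold ρ; split_ifs <;> infer_instance
  have hexp (i : Fin N) (t : ℝ) : Integrable (fun y => exp (t * y)) (ρ i) := by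
    unfold ρ; split_ifs
    exacts [hν t, hμ t]
  have hprod (t : ℝ) : ∏ i, charFun ((ρ i).map (· - A)) t =
      charFun (ν.map (· - A)) t * charFun (μ.map (· - A)) t ^ (N - 1) :=
    prod_apply_ite_val_eq_zero hN₀ (fun τ : Measure ℝ => charFun (τ.map (· - A)) t) ν μ
  have hsum : ∑ i, (δ * A - cgf id (ρ i) δ) =
      δ * (N * A) - (cgf id ν δ + (N - 1) * cgf id μ δ) := by
    rw [sum_apply_ite_val_eq_zero hN₀ (fun τ => δ * A - cgf id τ δ), nsmul_eq_mul, hcast]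
    ring
  have hlaw' : (Measure.pi fun i => (ρ i).tilted (δ * ·)).map
      (fun x => (√N)⁻¹ * ∑ i, (x i - A)) = volume.withDensity fun y => ENNReal.ofReal (G y) := by
    have hcentre : ∑ i : Fin N, (if (i : ℕ) = 0 then m₁ else m₂) = ∑ _ : Fin N, A := by
      rw [sum_apply_ite_val_eq_zero hN₀ fun m : ℝ => m, nsmul_eq_mul, hcast, hm]
      simp
    simp only [← hlaw, Finset.sum_sub_distrib, hcentre, ρ,
      apply_ite fun τ : Measure ℝ => τ.tilted (δ * ·)]
  have hint : Integrable fun t => ∏ i, charFun ((ρ i).map (· - A)) t := by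
    simpa only [hprod] using integrable_charFun_mul_charFun_pow hc hdecay (by omega)
  have hmax := max_zero_eq_integral_re_prod_charFun hexp (r := (√N)⁻¹) (by positivity) hG hlaw' hint
  simp only [hprod, hsum] at hmax
  rw [((max_eq_iff.1 hmax).resolve_right fun h => absurd h.1 (by positivity)).1]
  field_simp

end OneReplaced

section Recentring

variable {μ : Measure ℝ}

lemma norm_charFun_map_sub_const (A t : ℝ) : ‖charFun (μ.map (· - A)) t‖ = ‖charFun μ t‖ := by
  simp only [sub_eq_add_neg, charFun_map_add_const]
  simp [Complex.norm_exp]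

lemma integrable_exp_mul_map_sub_const (hμ : ∀ t, Integrable (fun y => exp (t * y)) μ) (A t : ℝ) :
    Integrable (fun y => exp (t * y)) (μ.map (· - A)) :=
  (integrable_map_measure (by fun_prop) (by fun_prop)).2 (integrable_exp_mul_sub A (hμ t))

lemma integral_map_sub_integral [IsProbabilityMeasure μ] :
    ∫ y, y ∂μ.map (· - ∫ x, x ∂μ) = 0 := by
  rw [integral_map (by fun_prop) (by fun_prop)]
  simpa only [average_eq_integral] using integral_sub_average μ fun y : ℝ => y

lemma integral_sq_map_sub_integral :
    ∫ y, y ^ 2 ∂μ.map (· - ∫ x, x ∂μ) = Var[id; μ] := by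
  rw [integral_map (by fun_prop) (by fun_prop), variance_eq_integral aemeasurable_id]
  rfl

end Recentring

/-! ### The ratio of the densities -/

section DensityRatio

variable {μ ν : Measure ℝ} [IsProbabilityMeasure μ] [IsProbabilityMeasure ν]
  (hμ : ∀ t, Integrable (fun y => exp (t * y)) μ) (hν : ∀ t, Integrable (fun y => exp (t * y)) ν)
  {K A : ℝ} (hK : 0 < K) (hvar : ∀ t, K⁻¹ ≤ Var[id; μ.tilted (t * ·)]) (hA : ∫ y, y ∂μ = A)
  {δ : ℕ → ℝ} (hδ : ∀ N : ℕ, 2 ≤ N → ∀ t,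
    t * (N * A) - (cgf id ν t + (N - 1) * cgf id μ t) ≤
      δ N * (N * A) - (cgf id ν (δ N) + (N - 1) * cgf id μ (δ N)))

include hμ hν hK hvar hA hδ

lemma isBigO_mul_sub_cgf_add_mul_cgf :
    (fun N : ℕ => δ N * (N * A) - (cgf id ν (δ N) + (N - 1) * cgf id μ (δ N)))
      =O[atTop] fun N : ℕ => (N : ℝ)⁻¹ := by
  refine .of_bound (K * (A - ∫ y, y ∂ν) ^ 2) ?_
  filter_upwards [eventually_ge_atTop 2] with N hN
  have hN' : (2 : ℝ) ≤ N := by exact_mod_cast hN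
  have hlower := hδ N hN 0
  have hupper := mul_sub_cgf_add_mul_cgf_le hK (by linarith : (0 : ℝ) < N - 1) hν hμ hvar (δ N)
  simp only [zero_mul, cgf_zero, mul_zero, add_zero, sub_self] at hlower
  rw [add_sub_cancel, hA] at hupper
  rw [norm_of_nonneg hlower, norm_of_nonneg (by positivity), ← div_eq_mul_inv]
  refine hupper.trans ?_
  gcongr
  linarith

variable {c : ℝ} (hc : 0 < c) (hdecay : ∀ t, ‖charFun μ t‖ ^ 2 ≤ (1 + c * t ^ 2)⁻¹)

include hc hdecay

theorem isBigO_log_density_div {g gP : ℕ → ℝ → ℝ} (hg : ∀ N, Continuous (g N))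
    (hgP : ∀ N, Continuous (gP N))
    (hglaw : ∀ N : ℕ, 2 ≤ N →
      (Measure.pi fun _ : Fin N => μ).map (fun x : Fin N → ℝ => (√N)⁻¹ * ∑ i, (x i - A)) =
        volume.withDensity fun y => ENNReal.ofReal (g N y))
    (hgPlaw : ∀ N : ℕ, 2 ≤ N →
      (Measure.pi fun i : Fin N =>
        if (i : ℕ) = 0 then ν.tilted (δ N * ·) else μ.tilted (δ N * ·)).map
          (fun x : Fin N → ℝ => (√N)⁻¹ * ∑ i, (x i -
            if (i : ℕ) = 0 then ∫ y, y ∂ν.tilted (δ N * ·) else ∫ y, y ∂μ.tilted (δ N * ·))) =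
        volume.withDensity fun y => ENNReal.ofReal (gP N y)) :
    (fun N => log (gP N 0 / g N 0)) =O[atTop] fun N : ℕ => (N : ℝ)⁻¹ := by
  have hprefactor := isBigO_mul_sub_cgf_add_mul_cgf hμ hν hK hvar hA hδ
  have hμ₀ := integrable_exp_mul_map_sub_const hμ A
  have hν₀ := integrable_exp_mul_map_sub_const hν A
  have hdecay₀ (t : ℝ) : ‖charFun (μ.map (· - A)) t‖ ^ 2 ≤ (1 + c * t ^ 2)⁻¹ :=
    (norm_charFun_map_sub_const A t).symm ▸ hdecay t
  have := Measure.isProbabilityMeasure_map (μ := μ) (f := (· - A)) (by fun_prop)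
  have := Measure.isProbabilityMeasure_map (μ := ν) (f := (· - A)) (by fun_prop)
  have hmean₀ : ∫ y, y ∂μ.map (· - A) = 0 := hA ▸ integral_map_sub_integral
  have hvar₀ : 0 < ∫ y, y ^ 2 ∂μ.map (· - A) := by
    rw [← hA, integral_sq_map_sub_integral]
    exact (inv_pos.2 hK).trans_le (by simpa using hvar 0)
  refine (hprefactor.add
    (isBigO_log_integral_re_charFun_mul_pow_div hμ₀ hν₀ hc hdecay₀ hmean₀ hvar₀)).congr' ?_ .rfl
  filter_upwards [eventually_ge_atTop 7,
    eventually_integral_re_charFun_pow_pos hc hdecay₀ hmean₀ hvar₀,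
    eventually_integral_re_charFun_mul_pow_pos hμ₀ hν₀ hc hdecay₀ hmean₀ hvar₀] with N hN hpos hpos'
  have hgPzero := density_zero_eq_integral_re_charFun_mul_pow hμ hν hc hdecay₀ hN (hgP N)
    (integral_tilted_add_mul_integral_tilted_eq hν hμ (hδ N (by omega))) (hgPlaw N (by omega)) hpos'
  have hgzero := density_zero_eq_integral_re_charFun_mul_pow (m₁ := A) (m₂ := A) (δ := 0) hμ hμ hc
    hdecay₀ hN (hg N) (by ring) (by simpa using hglaw N (by omega))
    (by simpa only [mul_pow_sub_one (by omega : N ≠ 0)] using hpos)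
  simp only [mul_pow_sub_one (by omega : N ≠ 0), zero_mul, cgf_zero, mul_zero, add_zero, sub_self,
    exp_zero, one_mul] at hgzero
  rw [hgPzero, hgzero, mul_assoc, mul_div_assoc, mul_div_mul_left _ _ (by positivity),
    log_mul (exp_ne_zero _) (by positivity), log_exp]

end DensityRatio

lemma integrable_exp_mul_sub_of_le_deriv_deriv {V : ℝ → ℝ} {κ : ℝ} (hκ : 0 < κ)
    (hV : ContDiff ℝ 2 V) (hV' : ∀ y, κ ≤ deriv (deriv V) y) (σ : ℝ) :
    Integrable fun y => exp (σ * y - V y) := by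
  have := hV.continuous
  set d := (σ - deriv V 0) / κ
  have hgauss := ((integrable_exp_neg_mul_sq (by positivity : 0 < κ / 2)).comp_sub_right
    d).const_mul (exp (κ / 2 * d ^ 2 - V 0))
  refine hgauss.mono' (by fun_prop) (Eventually.of_forall fun y => ?_)
  have hd : κ * d = σ - deriv V 0 := mul_div_cancel₀ _ hκ.ne'
  have hd' : κ * d * y = (σ - deriv V 0) * y := by rw [hd]
  rw [norm_of_nonneg (exp_pos _).le, ← exp_add, exp_le_exp]
  linarith [add_deriv_mul_sub_add_sq_le hV hV' 0 y]

/- Up to an additive constant, the cumulant generating function of a Gibbs measure is the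
logarithm of the partition function. -/
lemma mul_sub_cgf_gibbs_le_of_forall_le {V W : ℝ → ℝ} {B r σ₁ : ℝ}
    (hV : ∀ σ, Integrable fun y => exp (σ * y - V y))
    (hW : ∀ σ, Integrable fun y => exp (σ * y - W y))
    (hmax : ∀ σ, σ * B - (log (∫ y, exp (σ * y - W y)) + r * log (∫ y, exp (σ * y - V y))) ≤
      σ₁ * B - (log (∫ y, exp (σ₁ * y - W y)) + r * log (∫ y, exp (σ₁ * y - V y)))) (σ₀ t : ℝ) :
    t * B - (cgf id (gibbs W σ₀) t + r * cgf id (gibbs V σ₀) t) ≤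
      (σ₁ - σ₀) * B - (cgf id (gibbs W σ₀) (σ₁ - σ₀) + r * cgf id (gibbs V σ₀) (σ₁ - σ₀)) := by
  have := hmax (σ₀ + t)
  simp only [cgf_id_gibbs hV, cgf_id_gibbs hW, add_sub_cancel]
  linarith

lemma gibbsMean_eq_of_forall_le {V : ℝ → ℝ} {A σ₀ : ℝ}
    (hV : ∀ σ, Integrable fun y => exp (σ * y - V y))
    (hmax : ∀ σ, σ * A - log (∫ y, exp (σ * y - V y)) ≤
      σ₀ * A - log (∫ y, exp (σ₀ * y - V y))) :
    gibbsMean V σ₀ = A := by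
  have hexp := integrable_exp_mul_gibbs hV σ₀
  have := integral_tilted_add_mul_integral_tilted_eq (r := 0) hexp hexp
    (mul_sub_cgf_gibbs_le_of_forall_le hV hV (by simpa using hmax) σ₀)
  rwa [sub_self, tilted_gibbs hV, add_zero, zero_mul, add_zero, ← gibbsMean_eq_integral] at this

theorem ratio_of_densities_estimate_general
    (ψ W : ℝ → ℝ) (K : ℝ) (hψ : ContDiff ℝ 2 ψ) (hψ'' : ∀ y, |deriv (deriv ψ) y| ≤ K)
    (hψint : ∀ σ, Integrable fun y => exp (σ * y - ψ y))
    (hWint : ∀ σ, Integrable fun y => exp (σ * y - W y))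
    (A σ₀ : ℝ)
    (hσ₀ : ∀ σ : ℝ,
      σ * A - log (∫ y : ℝ, exp (-ψ y + σ * y)) ≤ σ₀ * A - log (∫ y : ℝ, exp (-ψ y + σ₀ * y)))
    (σP : ℕ → ℝ)
    (hσP : ∀ N : ℕ, 2 ≤ N → ∀ σ : ℝ,
      σ * A - (N : ℝ)⁻¹ * (log (∫ y : ℝ, exp (-W y + σ * y)) +
         ((N : ℝ) - 1) * log (∫ y : ℝ, exp (-ψ y + σ * y))) ≤
      σP N * A - (N : ℝ)⁻¹ * (log (∫ y : ℝ, exp (-W y + σP N * y)) +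
         ((N : ℝ) - 1) * log (∫ y : ℝ, exp (-ψ y + σP N * y))))
    (g gP : ℕ → ℝ → ℝ)
    (hgcont : ∀ N, Continuous (g N)) (hgPcont : ∀ N, Continuous (gP N))
    (hg : ∀ N : ℕ, 2 ≤ N →
      Measure.map (fun x : Fin N → ℝ => (√N)⁻¹ * ∑ i, (x i - gibbsMean ψ σ₀))
        (Measure.pi fun _ : Fin N => gibbs ψ σ₀)
      = volume.withDensity fun t => ENNReal.ofReal (g N t))
    (hgP : ∀ N : ℕ, 2 ≤ N →
      Measure.map
        (fun x : Fin N → ℝ => (√N)⁻¹ * ∑ i,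
          (x i - if (i : ℕ) = 0 then gibbsMean W (σP N) else gibbsMean ψ (σP N)))
        (Measure.pi fun i : Fin N =>
          if (i : ℕ) = 0 then gibbs W (σP N) else gibbs ψ (σP N))
      = volume.withDensity fun t => ENNReal.ofReal (gP N t)) :
    ∃ C > 0, ∃ N₀ : ℕ, ∀ N : ℕ, N₀ ≤ N → |log (gP N 0 / g N 0)| ≤ C / N := by
  simp only [neg_add_eq_sub] at hσ₀ hσP
  have := isProbabilityMeasure_gibbs hψint σ₀
  have := isProbabilityMeasure_gibbs hWint σ₀
  have hK : 0 < K := pos_of_abs_deriv_deriv_le hψint hψ hψ''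
  have hmean : gibbsMean ψ σ₀ = A := gibbsMean_eq_of_forall_le hψint hσ₀
  have hmax (N : ℕ) (hN : 2 ≤ N) :=
    mul_sub_cgf_gibbs_le_of_forall_le (r := N - 1) (B := N * A) (σ₁ := σP N) hψint hWint
      (fun σ => by
        have hscale (σ x : ℝ) : σ * (N * A) - x = N * (σ * A - (N : ℝ)⁻¹ * x) := by field_simp
        rw [hscale, hscale]
        exact mul_le_mul_of_nonneg_left (hσP N hN σ) N.cast_nonneg) σ₀
  have htilt {V : ℝ → ℝ} (hV : ∀ σ, Integrable fun y => exp (σ * y - V y)) (N : ℕ) :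
      (gibbs V σ₀).tilted ((σP N - σ₀) * ·) = gibbs V (σP N) := by
    rw [tilted_gibbs hV, add_sub_cancel]
  obtain ⟨C, hC, hbound⟩ := (isBigO_log_density_div (integrable_exp_mul_gibbs hψint σ₀)
    (integrable_exp_mul_gibbs hWint σ₀) hK
    (fun t => tilted_gibbs hψint σ₀ t ▸ inv_le_variance_gibbs hψint hψ hψ'' (σ₀ + t))
    (gibbsMean_eq_integral ψ σ₀ ▸ hmean) hmax (inv_pos.2 hK)
    (norm_charFun_gibbs_sq_le hψint hψ hψ'' σ₀) hgcont hgPcont (by simpa only [hmean] using hg)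
    (by simpa only [htilt hψint, htilt hWint, ← gibbsMean_eq_integral] using hgP)).exists_pos
  obtain ⟨N₀, hN₀⟩ := eventually_atTop.1 hbound.bound
  exact ⟨C, hC, N₀, fun N hN => by simpa [div_eq_mul_inv] using hN₀ N hN⟩

end

/-- `|log (g^P_{N,A}(0) / g_{N,A}(0))| ≤ C/N` for all large `N`. -/
theorem ratio_of_densities_estimate
    (ψ P : ℝ → ℝ) (κ₁ κ₂ ς₁ ς₂ : ℝ)
    (hψ : ContDiff ℝ 2 ψ) (hP : ContDiff ℝ 2 P)
    (hκ₁ : 0 < κ₁) (hκ : κ₁ ≤ κ₂) (hς₁ : 0 < ς₁) (hς : ς₁ ≤ ς₂)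
    (hψ'' : ∀ y : ℝ, κ₁ ≤ deriv (deriv ψ) y ∧ deriv (deriv ψ) y ≤ κ₂)
    (hψP'' : ∀ y : ℝ, ς₁ ≤ deriv (deriv (fun z => ψ z + P z)) y ∧
        deriv (deriv (fun z => ψ z + P z)) y ≤ ς₂)
    (A σ₀ : ℝ)
    (hσ₀ : ∀ σ : ℝ,
      σ * A - Real.log (∫ y : ℝ, Real.exp (-ψ y + σ * y)) ≤
      σ₀ * A - Real.log (∫ y : ℝ, Real.exp (-ψ y + σ₀ * y)))
    (σP : ℕ → ℝ)
    (hσP : ∀ N : ℕ, 2 ≤ N → ∀ σ : ℝ,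
      σ * A - (N : ℝ)⁻¹ *
        (Real.log (∫ y : ℝ, Real.exp (-(ψ y + P y) + σ * y)) +
         ((N : ℝ) - 1) * Real.log (∫ y : ℝ, Real.exp (-ψ y + σ * y))) ≤
      σP N * A - (N : ℝ)⁻¹ *
        (Real.log (∫ y : ℝ, Real.exp (-(ψ y + P y) + σP N * y)) +
         ((N : ℝ) - 1) * Real.log (∫ y : ℝ, Real.exp (-ψ y + σP N * y))))
    (g gP : ℕ → ℝ → ℝ)
    (hgcont : ∀ N, Continuous (g N)) (hgPcont : ∀ N, Continuous (gP N))
    (hg : ∀ N : ℕ, 2 ≤ N →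
      Measure.map
        (fun x : Fin N → ℝ => (Real.sqrt N)⁻¹ * ∑ i, (x i - gibbsMean ψ σ₀))
        (Measure.pi fun _ : Fin N => gibbs ψ σ₀)
      = volume.withDensity fun t => ENNReal.ofReal (g N t))
    (hgP : ∀ N : ℕ, 2 ≤ N →
      Measure.map
        (fun x : Fin N → ℝ => (Real.sqrt N)⁻¹ * ∑ i,
          (x i - if (i : ℕ) = 0 then gibbsMean (fun z => ψ z + P z) (σP N)
                 else gibbsMean ψ (σP N)))
        (Measure.pi fun i : Fin N =>
          if (i : ℕ) = 0 then gibbs (fun z => ψ z + P z) (σP N) else gibbs ψ (σP N))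
      = volume.withDensity fun t => ENNReal.ofReal (gP N t)) :
    ∃ C > 0, ∃ N₀ : ℕ, ∀ N : ℕ, N₀ ≤ N →
      |Real.log (gP N 0 / g N 0)| ≤ C / N := by
  exact ratio_of_densities_estimate_general ψ (fun z => ψ z + P z) κ₂ hψ
    (fun y => abs_le.2 ⟨by linarith [hψ'' y], (hψ'' y).2⟩)
    (integrable_exp_mul_sub_of_le_deriv_deriv hκ₁ hψ fun y => (hψ'' y).1)
    (integrable_exp_mul_sub_of_le_deriv_deriv hς₁ (hψ.add hP) fun y => (hψP'' y).1)
    A σ₀ hσ₀ σP hσP g gP hgcont hgPcont hg hgP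
end
end
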